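/- arXiv:2207.13282 — 6 statements merged into one kernel-verified Lean document; each statement's English description precedes it below -/
import Mathlib

section
/- Let m, n ≥ 2 be integers. The number of proper 3-colorings of the rectangular grid graph with m+1 columns and n+1 rows (i.e., functions h : {1,…,m+1}×{1,…,n+1} → 𝔽₃ with h_{i+1,j} ≠ h_{i,j} and h_{i,j+1} ≠ h_{i,j} for all valid i, j) is exactly three times the number of admissible closed 1-forms on the m×n grid (equivalently, three times the number of admissible states of the six-vertex model). -/
/-!
Every closed 1-form on the grid is the differential of a function, unique once its value at one
corner is fixed: integrate along the bottom row, then up each column; closedness makes the result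
independent of the path. A coloring is proper exactly when its differential vanishes nowhere, that
is, when the differential plus the constant form `a dx + a dy` omits the value `a`. Adding a
constant form preserves closedness, so the proper colorings correspond to pairs of a corner color
and a closed 1-form omitting `a`.
-/

/-- The 1-forms `f dx + g dy` on the `m × n` grid with values in `A`, encoded as pairs `(f, g)`. -/
abbrev GridOneForm (A : Type*) (m n : ℕ) : Type _ :=
  (Fin m → Fin (n + 1) → A) × (Fin (m + 1) → Fin n → A)

/-- Proper colorings, by colors in `A`, of the grid graph on `Fin (m + 1) × Fin (n + 1)`. -/
def IsProperGridColoring {A : Type*} {m n : ℕ} (h : Fin (m + 1) → Fin (n + 1) → A) : Prop :=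
  (∀ (i : Fin m) (j : Fin (n + 1)), h i.castSucc j ≠ h i.succ j) ∧
    ∀ (i : Fin (m + 1)) (j : Fin n), h i j.castSucc ≠ h i j.succ

namespace GridOneForm

/-- The 1-forms whose coefficients never take the value `a`. For `A = ZMod 3` and `a = 2` these are
the admissible ones. -/
def Omits {A : Type*} {m n : ℕ} (q : GridOneForm A m n) (a : A) : Prop :=
  (∀ i j, q.1 i j ≠ a) ∧ ∀ i j, q.2 i j ≠ a

/-- The form `a dx + a dy`. -/
def const {A : Type*} (m n : ℕ) (a : A) : GridOneForm A m n :=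
  (fun _ _ => a, fun _ _ => a)

variable {A : Type*} [AddCommGroup A] {m n : ℕ}

/-- Closed 1-forms: the circulation around each unit square is zero. -/
def IsClosed (q : GridOneForm A m n) : Prop :=
  ∀ (i : Fin m) (j : Fin n),
    q.1 i j.succ - q.1 i j.castSucc = q.2 i.succ j - q.2 i.castSucc j

/-- The differential `dh` of a function `h` on the lattice points. -/
def differential (h : Fin (m + 1) → Fin (n + 1) → A) : GridOneForm A m n :=
  (fun i j => h i.succ j - h i.castSucc j, fun i j => h i j.succ - h i j.castSucc)

/-- The integral of `q` along the path from the corner `(0, 0)` to `(i, 0)` and then to `(i, j)`,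
with value `c` at the corner. It is a primitive of `q` when `q` is closed. -/
def primitive (c : A) (q : GridOneForm A m n) (i : Fin (m + 1)) (j : Fin (n + 1)) : A :=
  c + Fin.partialSum (fun k => q.1 k 0) i + Fin.partialSum (q.2 i) j

theorem isClosed_differential (h : Fin (m + 1) → Fin (n + 1) → A) :
    (differential h).IsClosed := by
  intro i j
  simp only [differential]
  abel

theorem IsClosed.add {p q : GridOneForm A m n} (hp : p.IsClosed) (hq : q.IsClosed) :
    (p + q).IsClosed := by
  intro i j
  simp only [Prod.fst_add, Prod.snd_add, Pi.add_apply, add_sub_add_comm, hp i j, hq i j]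

theorem IsClosed.sub {p q : GridOneForm A m n} (hp : p.IsClosed) (hq : q.IsClosed) :
    (p - q).IsClosed := by
  intro i j
  simp only [Prod.fst_sub, Prod.snd_sub, Pi.sub_apply]
  rw [sub_sub_sub_comm, hp i j, hq i j, sub_sub_sub_comm]

theorem isClosed_const (a : A) : (const m n a).IsClosed :=
  fun _ _ => rfl

theorem primitive_zero_zero (c : A) (q : GridOneForm A m n) : primitive c q 0 0 = c := by
  simp only [primitive, Fin.partialSum_zero, add_zero]

theorem primitive_differential (h : Fin (m + 1) → Fin (n + 1) → A) :
    primitive (h 0 0) (differential h) = h := by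
  have telescope {k : ℕ} (u : Fin (k + 1) → A) (l : Fin (k + 1)) :
      u 0 + Fin.partialSum (fun i => u i.succ - u i.castSucc) l = u l := by
    simpa only [neg_add_eq_sub, Pi.vadd_apply, vadd_eq_add] using
      congrFun (Fin.partialSum_left_neg u) l
  funext i j
  simp only [primitive, differential, telescope (fun i => h i 0), telescope (h i)]

theorem IsClosed.differential_primitive {q : GridOneForm A m n} (hq : q.IsClosed) (c : A) :
    differential (primitive c q) = q := by
  have along_x (i : Fin m) (j : Fin (n + 1)) :
      primitive c q i.succ j - primitive c q i.castSucc j = q.1 i j := by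
    induction j using Fin.induction with
    | zero => simp only [primitive, Fin.partialSum_zero, Fin.partialSum_succ]; abel
    | succ j ih =>
      calc primitive c q i.succ j.succ - primitive c q i.castSucc j.succ
          = (primitive c q i.succ j.castSucc - primitive c q i.castSucc j.castSucc)
              + (q.2 i.succ j - q.2 i.castSucc j) := by
            simp only [primitive, Fin.partialSum_succ]; abel
        _ = q.1 i j.succ := by rw [ih, ← hq i j, add_sub_cancel]
  have along_y (i : Fin (m + 1)) (j : Fin n) :
      primitive c q i j.succ - primitive c q i j.castSucc = q.2 i j := by
    simp only [primitive, Fin.partialSum_succ]; abel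
  exact Prod.ext (funext₂ along_x) (funext₂ along_y)

theorem omits_differential_add_const_iff (h : Fin (m + 1) → Fin (n + 1) → A) (a : A) :
    (differential h + const m n a).Omits a ↔ IsProperGridColoring h := by
  simp only [Omits, IsProperGridColoring, differential, const, Prod.fst_add, Prod.snd_add,
    Pi.add_apply, ne_eq, add_eq_right, sub_eq_zero, eq_comm (a := h (Fin.succ _) _),
    eq_comm (a := h _ (Fin.succ _))]

/-- A proper coloring `h` corresponds to its color at the corner and the form `dh + a dx + a dy`. -/
def properColoringEquiv (m n : ℕ) (a : A) :
    {h : Fin (m + 1) → Fin (n + 1) → A // IsProperGridColoring h} ≃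
      A × {q : GridOneForm A m n // q.IsClosed ∧ q.Omits a} where
  toFun h := (h.1 0 0, ⟨differential h.1 + const m n a,
    (isClosed_differential h.1).add (isClosed_const a),
    (omits_differential_add_const_iff h.1 a).2 h.2⟩)
  invFun x := ⟨primitive x.1 (x.2.1 - const m n a), by
    rw [← omits_differential_add_const_iff _ a,
      (x.2.2.1.sub (isClosed_const a)).differential_primitive, sub_add_cancel]
    exact x.2.2.2⟩
  left_inv h := Subtype.ext <| by
    simp only [add_sub_cancel_right, primitive_differential]
  right_inv x := Prod.ext (primitive_zero_zero _ _) <| Subtype.ext <| by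
    simp only [(x.2.2.1.sub (isClosed_const a)).differential_primitive, sub_add_cancel]

end GridOneForm

/-- The count is by cardinals because `Nat.card` of an infinite type is the junk value `0`. -/
theorem stmt_2_general {A : Type*} [AddCommGroup A] (m n : ℕ) (a : A) :
    Cardinal.mk {h : Fin (m + 1) → Fin (n + 1) → A // IsProperGridColoring h} =
      Cardinal.mk A * Cardinal.mk {q : GridOneForm A m n // q.IsClosed ∧ q.Omits a} := by
  rw [Cardinal.mul_def]
  exact (GridOneForm.properColoringEquiv m n a).cardinal_eq

/-- There are three times as many proper 3-colorings of the (m+1)×(n+1) grid graph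
as there are admissible closed 1-forms on the m×n grid. -/
theorem stmt_2 (m n : ℕ) (hm : 2 ≤ m) (hn : 2 ≤ n) :
    Nat.card {h : Fin (m + 1) → Fin (n + 1) → ZMod 3 //
        (∀ (i : Fin m) (j : Fin (n + 1)), h i.castSucc j ≠ h i.succ j) ∧
        (∀ (i : Fin (m + 1)) (j : Fin n), h i j.castSucc ≠ h i j.succ)} =
    3 * Nat.card {q : (Fin m → Fin (n + 1) → ZMod 3) × (Fin (m + 1) → Fin n → ZMod 3) //
        (∀ (i : Fin m) (j : Fin n),
          q.1 i j.succ - q.1 i j.castSucc = q.2 i.succ j - q.2 i.castSucc j) ∧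
        (∀ i j, q.1 i j ≠ 2) ∧ (∀ i j, q.2 i j ≠ 2)} := by
  exact (congrArg Cardinal.toNat (stmt_2_general m n (2 : ZMod 3))).trans <|
    (map_mul _ _ _).trans <| congrArg (· * _) (Nat.card_zmod 3)
end

section
/- Let m, n ≥ 2 be integers not divisible by 3. (a) Every admissible closed toroidal 1-form ω over 𝔽₃ can be written uniquely as ω = r dx + s dy + dh, where r, s ∈ 𝔽₃ and h is a sparse function; in particular the map sending ω to this h is a well-defined surjection from admissible closed toroidal 1-forms onto sparse functions. (b) Conversely, for every sparse function h there exist r, s ∈ 𝔽₃ (namely any r with 2 − r not in the image of D_x h and any s with 2 − s not in the image of D_y h) such that r dx + s dy + dh is an admissible closed toroidal 1-form. -/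
/-- A doubly periodic 𝔽₃-valued function on ℤ×ℤ. -/
def DoublyPeriodic (m n : ℕ) (h : ℤ → ℤ → ZMod 3) : Prop :=
  ∀ i j : ℤ, h (i + m) j = h i j ∧ h i (j + n) = h i j

/-- Discrete partial derivative in the x-direction. -/
def Dx (h : ℤ → ℤ → ZMod 3) : ℤ → ℤ → ZMod 3 := fun i j => h (i + 1) j - h i j

/-- Discrete partial derivative in the y-direction. -/
def Dy (h : ℤ → ℤ → ZMod 3) : ℤ → ℤ → ZMod 3 := fun i j => h i (j + 1) - h i j

/-- A doubly periodic function is sparse if neither D_x h nor D_y h is surjective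
and h_{1,1} = 0. -/
def Sparse (m n : ℕ) (h : ℤ → ℤ → ZMod 3) : Prop :=
  DoublyPeriodic m n h ∧
  ¬ Function.Surjective (fun p : ℤ × ℤ => Dx h p.1 p.2) ∧
  ¬ Function.Surjective (fun p : ℤ × ℤ => Dy h p.1 p.2) ∧
  h 1 1 = 0

/-!
On `ℤ × ℤ` a closed form has a potential `H`, unique up to a constant. If the form is doubly
periodic, a translation by a period changes `H` by a constant. When multiplication by `m` and by `n`
is bijective on the value group, exactly one linear function has the same two constants, and
subtracting it from `H` leaves a doubly periodic `h`; its slopes are `r` and `s`. Since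
`f = r + D_x h`, the form omits the value `c` in the direction `x` if and only if `D_x h` omits
`c - r`, so admissibility turns into sparseness.
-/

variable {A : Type*} [AddCommGroup A] {m n : ℕ} {f g h h' : ℤ → ℤ → A} {r r' s s' : A}

/-- A function on `ℤ × ℤ` which has the periods `(m, 0)` and `(0, n)`, that is, a function on the
discrete `m × n` torus, with values in any type. -/
def IsDoublyPeriodic (m n : ℕ) (h : ℤ → ℤ → A) : Prop :=
  ∀ i j : ℤ, h (i + m) j = h i j ∧ h i (j + n) = h i j

/-- The discrete partial derivative `D_x` for values in any abelian group. -/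
def diffX (h : ℤ → ℤ → A) (i j : ℤ) : A := fwdDiff 1 (fun k => h k j) i

/-- The discrete partial derivative `D_y` for values in any abelian group. -/
def diffY (h : ℤ → ℤ → A) (i j : ℤ) : A := fwdDiff 1 (h i) j

/-- The sparse functions for values in any abelian group: doubly periodic functions whose partial
derivatives each omit a value, normalized at the base point `(1, 1)`. -/
def IsSparse (m n : ℕ) (h : ℤ → ℤ → A) : Prop :=
  IsDoublyPeriodic m n h ∧
  ¬ Function.Surjective (fun p : ℤ × ℤ => diffX h p.1 p.2) ∧
  ¬ Function.Surjective (fun p : ℤ × ℤ => diffY h p.1 p.2) ∧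
  h 1 1 = 0

section OneVariable

variable {u : ℤ → A} {c : A}

theorem exists_fwdDiff_eq (a : ℤ) (u : ℤ → A) :
    ∃ U : ℤ → A, U a = 0 ∧ ∀ i, fwdDiff 1 U i = u i := by
  let U (i : ℤ) : A :=
    Int.inductionOn' i a 0 (fun k _ x => x + u k) (fun k _ x => x - u (k - 1))
  refine ⟨U, Int.inductionOn'_self, fun i => sub_eq_of_eq_add' ?_⟩
  rcases le_or_gt a i with hi | hi
  · exact Int.inductionOn'_add_one hi
  · have hstep : U (i + 1 - 1) = U (i + 1) - u (i + 1 - 1) := Int.inductionOn'_sub_one hi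
    rw [add_sub_cancel_right] at hstep
    rw [hstep, sub_add_cancel]

theorem eq_add_zsmul_of_fwdDiff_eq_const (hu : ∀ i, fwdDiff 1 u i = c) (a i : ℤ) :
    u i = u a + (i - a) • c := by
  have hper : Function.Periodic (fun k => u k - k • c) 1 := fun k => by
    have hk : u (k + 1) = c + u k := sub_eq_iff_eq_add.mp (hu k)
    simp only [hk]
    module
  have hi := hper.zsmul (i - a) a
  simp only [smul_eq_mul, mul_one, add_sub_cancel] at hi
  linear_combination (norm := module) hi

theorem nsmul_eq_zero_of_periodic_of_fwdDiff_eq_const (hper : Function.Periodic u (m : ℤ))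
    (hu : ∀ i, fwdDiff 1 u i = c) : m • c = 0 := by
  have hm := eq_add_zsmul_of_fwdDiff_eq_const hu 0 (0 + m)
  rwa [hper 0, left_eq_add, zero_add, sub_zero, natCast_zsmul] at hm

end OneVariable

theorem eq_add_zsmul_of_diff_eq_const (hx : ∀ i j, diffX h i j = r) (hy : ∀ i j, diffY h i j = s)
    (a b i j : ℤ) : h i j = h a b + (i - a) • r + (j - b) • s := by
  rw [eq_add_zsmul_of_fwdDiff_eq_const (hy i) b j,
    eq_add_zsmul_of_fwdDiff_eq_const (fun k => hx k b) a i]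

theorem diffX_sub (h h' : ℤ → ℤ → A) (i j : ℤ) :
    diffX (fun i j => h i j - h' i j) i j = diffX h i j - diffX h' i j :=
  sub_sub_sub_comm ..

theorem diffY_sub (h h' : ℤ → ℤ → A) (i j : ℤ) :
    diffY (fun i j => h i j - h' i j) i j = diffY h i j - diffY h' i j :=
  sub_sub_sub_comm ..

theorem diffX_translate (h : ℤ → ℤ → A) (p q i j : ℤ) :
    diffX (fun i j => h (i + p) (j + q)) i j = diffX h (i + p) (j + q) := by
  simp only [diffX, fwdDiff, add_right_comm]

theorem diffY_translate (h : ℤ → ℤ → A) (p q i j : ℤ) :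
    diffY (fun i j => h (i + p) (j + q)) i j = diffY h (i + p) (j + q) := by
  simp only [diffY, fwdDiff, add_right_comm]

theorem diffX_const_add (r : A) (h : ℤ → ℤ → A) (i j : ℤ) :
    diffX (fun i j => r + h i j) i j = diffX h i j :=
  add_sub_add_left_eq_sub ..

theorem diffY_const_add (r : A) (h : ℤ → ℤ → A) (i j : ℤ) :
    diffY (fun i j => r + h i j) i j = diffY h i j :=
  add_sub_add_left_eq_sub ..

theorem diffY_diffX (h : ℤ → ℤ → A) (i j : ℤ) :
    diffY (diffX h) i j = diffX (diffY h) i j :=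
  sub_sub_sub_comm ..

theorem exists_potential (hclosed : ∀ i j, diffY f i j = diffX g i j) (a b : ℤ) :
    ∃ H : ℤ → ℤ → A, H a b = 0 ∧
      (∀ i j, diffX H i j = f i j) ∧ ∀ i j, diffY H i j = g i j := by
  obtain ⟨U, hUa, hU⟩ := exists_fwdDiff_eq a fun i => f i b
  choose V hVb hV using fun i => exists_fwdDiff_eq b (g i)
  have hfV : ∀ i j, f i j - diffX V i j = f i b := fun i j => by
    have hconst : ∀ k, fwdDiff 1 (fun j => f i j - diffX V i j) k = 0 := fun k => by
      have hdyV : diffY V = g := funext₂ hV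
      exact (diffY_sub f (diffX V) i k).trans (by rw [hclosed, diffY_diffX, hdyV, sub_self])
    simpa [diffX, fwdDiff, hVb] using eq_add_zsmul_of_fwdDiff_eq_const hconst b j
  refine ⟨fun i j => U i + V i j, by simp [hUa, hVb], fun i j => ?_, fun i j => ?_⟩
  · calc
      diffX (fun i j => U i + V i j) i j = fwdDiff 1 U i + diffX V i j := add_sub_add_comm ..
      _ = f i j := by rw [hU, ← hfV i j, sub_add_cancel]
  · exact (add_sub_add_left_eq_sub ..).trans (hV i j)

theorem translate_sub_eq {p q : ℤ} (hx : ∀ i j, diffX h (i + p) (j + q) = diffX h i j)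
    (hy : ∀ i j, diffY h (i + p) (j + q) = diffY h i j) (a b i j : ℤ) :
    h (i + p) (j + q) - h i j = h (a + p) (b + q) - h a b := by
  have hconst := eq_add_zsmul_of_diff_eq_const
    (h := fun i j => h (i + p) (j + q) - h i j) (r := 0) (s := 0)
    (fun i j => by rw [diffX_sub, diffX_translate, hx, sub_self])
    (fun i j => by rw [diffY_sub, diffY_translate, hy, sub_self]) a b i j
  simpa only [smul_zero, add_zero] using hconst

namespace IsDoublyPeriodic

theorem sub (hh : IsDoublyPeriodic m n h) (hh' : IsDoublyPeriodic m n h') :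
    IsDoublyPeriodic m n fun i j => h i j - h' i j :=
  fun i j => ⟨congrArg₂ _ (hh i j).1 (hh' i j).1, congrArg₂ _ (hh i j).2 (hh' i j).2⟩

theorem const_add (hh : IsDoublyPeriodic m n h) (r : A) :
    IsDoublyPeriodic m n fun i j => r + h i j :=
  fun i j => ⟨congrArg _ (hh i j).1, congrArg _ (hh i j).2⟩

theorem diffX (hh : IsDoublyPeriodic m n h) : IsDoublyPeriodic m n (diffX h) := fun i j => by
  simp only [_root_.diffX, fwdDiff, add_right_comm i (m : ℤ) 1, hh _ _, and_self]

theorem diffY (hh : IsDoublyPeriodic m n h) : IsDoublyPeriodic m n (diffY h) := fun i j => by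
  simp only [_root_.diffY, fwdDiff, add_right_comm j (n : ℤ) 1, hh _ _, and_self]

end IsDoublyPeriodic

theorem exists_eq_const_add_diff (hm : Function.Surjective fun x : A => m • x)
    (hn : Function.Surjective fun x : A => n • x) (hf : IsDoublyPeriodic m n f)
    (hg : IsDoublyPeriodic m n g) (hclosed : ∀ i j, diffY f i j = diffX g i j) (a b : ℤ) :
    ∃ (r s : A) (h : ℤ → ℤ → A), (IsDoublyPeriodic m n h ∧ h a b = 0) ∧
      (∀ i j, f i j = r + diffX h i j) ∧ ∀ i j, g i j = s + diffY h i j := by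
  obtain ⟨H, hHab, hHx, hHy⟩ := exists_potential hclosed a b
  obtain ⟨r, hr : m • r = H (a + m) b - H a b⟩ := hm _
  obtain ⟨s, hs : n • s = H a (b + n) - H a b⟩ := hn _
  have hperiodX : ∀ i j, H (i + m) j - H i j = m • r := fun i j => by
    simpa [hr] using translate_sub_eq (h := H) (p := m) (q := 0)
      (by simp [hHx, hf _ _]) (by simp [hHy, hg _ _]) a b i j
  have hperiodY : ∀ i j, H i (j + n) - H i j = n • s := fun i j => by
    simpa [hs] using translate_sub_eq (h := H) (p := 0) (q := n)
      (by simp [hHx, hf _ _]) (by simp [hHy, hg _ _]) a b i j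
  refine ⟨r, s, fun i j => H i j - ((i - a) • r + (j - b) • s),
    ⟨fun i j => ⟨?_, ?_⟩, by simp [hHab]⟩, fun i j => ?_, fun i j => ?_⟩
  · linear_combination (norm := module) hperiodX i j
  · linear_combination (norm := module) hperiodY i j
  · rw [diffX_sub, hHx]
    simp only [diffX, fwdDiff]
    module
  · rw [diffY_sub, hHy]
    simp only [diffY, fwdDiff]
    module

theorem eq_of_const_add_diff_eq (hm : Function.Injective fun x : A => m • x)
    (hn : Function.Injective fun x : A => n • x) (hh : IsDoublyPeriodic m n h)
    (hh' : IsDoublyPeriodic m n h') {a b : ℤ} (hab : h a b = h' a b)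
    (hx : ∀ i j, r + diffX h i j = r' + diffX h' i j)
    (hy : ∀ i j, s + diffY h i j = s' + diffY h' i j) : r = r' ∧ s = s' ∧ h = h' := by
  have hper := hh.sub hh'
  have hdx : ∀ i j, diffX (fun i j => h i j - h' i j) i j = r' - r := fun i j => by
    rw [diffX_sub]
    linear_combination (norm := module) hx i j
  have hdy : ∀ i j, diffY (fun i j => h i j - h' i j) i j = s' - s := fun i j => by
    rw [diffY_sub]
    linear_combination (norm := module) hy i j
  have hr : r' - r = 0 := hm <| (nsmul_eq_zero_of_periodic_of_fwdDiff_eq_const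
    (fun i => (hper i b).1) fun i => hdx i b).trans (smul_zero m).symm
  have hs : s' - s = 0 := hn <| (nsmul_eq_zero_of_periodic_of_fwdDiff_eq_const
    (fun j => (hper a j).2) (hdy a)).trans (smul_zero n).symm
  refine ⟨(sub_eq_zero.mp hr).symm, (sub_eq_zero.mp hs).symm, funext₂ fun i j => ?_⟩
  have hij := eq_add_zsmul_of_diff_eq_const hdx hdy a b i j
  rwa [hr, hs, hab, sub_self, smul_zero, smul_zero, add_zero, add_zero, sub_eq_zero] at hij

theorem forall_const_add_ne_iff {c : A} :
    (∀ i j, r + h i j ≠ c) ↔ c - r ∉ Set.range fun p : ℤ × ℤ => h p.1 p.2 := by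
  simp [eq_sub_iff_add_eq']

theorem not_surjective_of_const_add_ne {c : A} (hc : ∀ i j, r + h i j ≠ c) :
    ¬ Function.Surjective fun p : ℤ × ℤ => h p.1 p.2 :=
  fun hsurj => forall_const_add_ne_iff.mp hc (hsurj _)

theorem exists_const_sub_notMem_range (c : A)
    (hh : ¬ Function.Surjective fun p : ℤ × ℤ => h p.1 p.2) :
    ∃ r, c - r ∉ Set.range fun p : ℤ × ℤ => h p.1 p.2 := by
  obtain ⟨x, hx⟩ := not_forall.mp hh
  exact ⟨c - x, by rwa [sub_sub_cancel]⟩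

theorem existsUnique_isSparse_eq_const_add_diff {c : A}
    (hm : Function.Bijective fun x : A => m • x) (hn : Function.Bijective fun x : A => n • x)
    (hf : IsDoublyPeriodic m n f) (hg : IsDoublyPeriodic m n g)
    (hclosed : ∀ i j, diffY f i j = diffX g i j)
    (hfc : ∀ i j, f i j ≠ c) (hgc : ∀ i j, g i j ≠ c) :
    ∃! rsh : A × A × (ℤ → ℤ → A), IsSparse m n rsh.2.2 ∧
      (∀ i j, f i j = rsh.1 + diffX rsh.2.2 i j) ∧
      (∀ i j, g i j = rsh.2.1 + diffY rsh.2.2 i j) := by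
  obtain ⟨r, s, h, ⟨hper, h1⟩, hx, hy⟩ := exists_eq_const_add_diff hm.2 hn.2 hf hg hclosed 1 1
  have hsparse : IsSparse m n h :=
    ⟨hper, not_surjective_of_const_add_ne fun i j => hx i j ▸ hfc i j,
      not_surjective_of_const_add_ne fun i j => hy i j ▸ hgc i j, h1⟩
  refine ⟨(r, s, h), ⟨hsparse, hx, hy⟩, ?_⟩
  rintro ⟨r', s', h'⟩ ⟨⟨hper', -, -, h1'⟩, hx', hy'⟩
  obtain ⟨rfl, rfl, rfl⟩ := eq_of_const_add_diff_eq hm.1 hn.1 hper' hper (h1'.trans h1.symm)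
    (fun i j => (hx' i j).symm.trans (hx i j)) (fun i j => (hy' i j).symm.trans (hy i j))
  rfl

theorem stmt_7_general (c : A) (hm : Function.Bijective fun x : A => m • x)
    (hn : Function.Bijective fun x : A => n • x) :
    (∀ f g : ℤ → ℤ → A, IsDoublyPeriodic m n f → IsDoublyPeriodic m n g →
      (∀ i j, diffY f i j = diffX g i j) → (∀ i j, f i j ≠ c) → (∀ i j, g i j ≠ c) →
      ∃! rsh : A × A × (ℤ → ℤ → A), IsSparse m n rsh.2.2 ∧
        (∀ i j, f i j = rsh.1 + diffX rsh.2.2 i j) ∧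
        (∀ i j, g i j = rsh.2.1 + diffY rsh.2.2 i j)) ∧
    (∀ h : ℤ → ℤ → A, IsSparse m n h →
      (∃ r s : A, c - r ∉ Set.range (fun p : ℤ × ℤ => diffX h p.1 p.2) ∧
        c - s ∉ Set.range (fun p : ℤ × ℤ => diffY h p.1 p.2)) ∧
      (∀ r s : A, c - r ∉ Set.range (fun p : ℤ × ℤ => diffX h p.1 p.2) →
        c - s ∉ Set.range (fun p : ℤ × ℤ => diffY h p.1 p.2) →
        IsDoublyPeriodic m n (fun i j => r + diffX h i j) ∧
        IsDoublyPeriodic m n (fun i j => s + diffY h i j) ∧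
        (∀ i j, diffY (fun i j => r + diffX h i j) i j = diffX (fun i j => s + diffY h i j) i j) ∧
        (∀ i j, r + diffX h i j ≠ c) ∧ (∀ i j, s + diffY h i j ≠ c))) := by
  refine ⟨fun f g hf hg hclosed hfc hgc =>
    existsUnique_isSparse_eq_const_add_diff hm hn hf hg hclosed hfc hgc, ?_⟩
  rintro h ⟨hper, hx, hy, -⟩
  obtain ⟨r, hr⟩ := exists_const_sub_notMem_range c hx
  obtain ⟨s, hs⟩ := exists_const_sub_notMem_range c hy
  exact ⟨⟨r, s, hr, hs⟩, fun r s hr hs =>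
    ⟨hper.diffX.const_add r, hper.diffY.const_add s,
      fun i j => by rw [diffY_const_add, diffX_const_add, diffY_diffX],
      forall_const_add_ne_iff.mpr hr, forall_const_add_ne_iff.mpr hs⟩⟩

theorem zmod_nsmul_bijective_of_not_dvd {p k : ℕ} (hp : p.Prime) (hk : ¬ p ∣ k) :
    Function.Bijective fun x : ZMod p => k • x :=
  Nat.Coprime.nsmul_right_bijective <| by
    rwa [Nat.card_zmod, hp.coprime_iff_not_dvd]

/-- (a) Every admissible closed toroidal 1-form is uniquely r dx + s dy + dh with h sparse;
(b) conversely, for every sparse h and any r, s with 2 − r ∉ Im D_x h, 2 − s ∉ Im D_y h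
(such r, s exist), the form r dx + s dy + dh is an admissible closed toroidal 1-form. -/
theorem stmt_7 (m n : ℕ) (hm : 2 ≤ m) (hn : 2 ≤ n) (h3m : ¬ (3 ∣ m)) (h3n : ¬ (3 ∣ n)) :
    (∀ f g : ℤ → ℤ → ZMod 3,
      DoublyPeriodic m n f → DoublyPeriodic m n g →
      (∀ i j : ℤ, Dy f i j = Dx g i j) →
      (∀ i j : ℤ, f i j ≠ 2) → (∀ i j : ℤ, g i j ≠ 2) →
      ∃! rsh : ZMod 3 × ZMod 3 × (ℤ → ℤ → ZMod 3),
        Sparse m n rsh.2.2 ∧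
        (∀ i j : ℤ, f i j = rsh.1 + Dx rsh.2.2 i j) ∧
        (∀ i j : ℤ, g i j = rsh.2.1 + Dy rsh.2.2 i j)) ∧
    (∀ h : ℤ → ℤ → ZMod 3, Sparse m n h →
      (∃ r s : ZMod 3,
        (2 - r) ∉ Set.range (fun p : ℤ × ℤ => Dx h p.1 p.2) ∧
        (2 - s) ∉ Set.range (fun p : ℤ × ℤ => Dy h p.1 p.2)) ∧
      (∀ r s : ZMod 3,
        (2 - r) ∉ Set.range (fun p : ℤ × ℤ => Dx h p.1 p.2) →
        (2 - s) ∉ Set.range (fun p : ℤ × ℤ => Dy h p.1 p.2) →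
        DoublyPeriodic m n (fun i j => r + Dx h i j) ∧
        DoublyPeriodic m n (fun i j => s + Dy h i j) ∧
        (∀ i j : ℤ, Dy (fun i j => r + Dx h i j) i j = Dx (fun i j => s + Dy h i j) i j) ∧
        (∀ i j : ℤ, r + Dx h i j ≠ 2) ∧ (∀ i j : ℤ, s + Dy h i j ≠ 2))) :=
  stmt_7_general 2 (zmod_nsmul_bijective_of_not_dvd Nat.prime_three h3m)
    (zmod_nsmul_bijective_of_not_dvd Nat.prime_three h3n)
end

section
/- Let m, n ≥ 2 be integers. The set of admissible states of the eight-vertex model on the m×n lattice, i.e., the kernel of the 𝔽₂-linear map φ(f,g)_{i,j} = f_{i,j} + g_{i,j} + f_{i,j+1} + g_{i+1,j} on pairs (f, g) with f : {1,…,m}×{1,…,n+1} → 𝔽₂ and g : {1,…,m+1}×{1,…,n} → 𝔽₂, is an 𝔽₂-vector space of dimension mn + m + n. -/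
/-!
At each vertex the relation `f (i, j) + g (i, j) + f (i, j + 1) + g (i + 1, j) = 0` can be solved
for `f (i, j + 1)`. Hence `g` and the first column of `f` can be prescribed arbitrarily, and the
rest of `f` is then determined uniquely, column by column. The kernel is therefore free of rank
`m + (m + 1) * n`.
-/

theorem existsUnique_zero_eq_and_add_succ_eq {A : Type*} [AddGroup A] {n : ℕ} (a : A)
    (h : Fin n → A) :
    ∃! x : Fin (n + 1) → A, x 0 = a ∧ ∀ j : Fin n, x j.castSucc + x j.succ = h j := by
  refine ⟨fun k ↦ Fin.induction (motive := fun _ ↦ A) a (fun j y ↦ -y + h j) k,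
    ⟨rfl, fun j ↦ ?_⟩, fun x ⟨hx_zero, hx_succ⟩ ↦ ?_⟩
  · simp only [Fin.induction_succ, add_neg_cancel_left]
  · funext k
    induction k using Fin.induction with
    | zero => exact hx_zero
    | succ j ih => rw [Fin.induction_succ, ← ih, ← hx_succ, neg_add_cancel_left]

section EightVertex

variable (R : Type*) (m n : ℕ)

/-- The map `φ` of the eight-vertex model with coefficients in `R`: the sum of a state `(f, g)`
over the four edges at each vertex. Its kernel consists of the admissible states. -/
def vertexSum [Semiring R] :
    ((Fin m → Fin (n + 1) → R) × (Fin (m + 1) → Fin n → R)) →ₗ[R] (Fin m × Fin n → R) where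
  toFun p x := p.1 x.1 x.2.castSucc + p.2 x.1.castSucc x.2 + p.1 x.1 x.2.succ + p.2 x.1.succ x.2
  map_add' p q := by
    funext x
    simp only [Prod.fst_add, Prod.snd_add, Pi.add_apply]
    abel
  map_smul' c p := by
    funext x
    simp only [Prod.smul_fst, Prod.smul_snd, Pi.smul_apply, smul_add, RingHom.id_apply]

/-- The free parameters of an admissible state: the first column of `f`, and all of `g`. -/
def initialData [Semiring R] :
    ((Fin m → Fin (n + 1) → R) × (Fin (m + 1) → Fin n → R)) →ₗ[R]
      (Fin m → R) × (Fin (m + 1) → Fin n → R) :=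
  ((LinearMap.proj 0).compLeft (Fin m)).prodMap LinearMap.id

variable {R m n}

theorem mem_ker_vertexSum_iff [Ring R]
    {p : (Fin m → Fin (n + 1) → R) × (Fin (m + 1) → Fin n → R)} :
    p ∈ LinearMap.ker (vertexSum R m n) ↔
      ∀ i j, p.1 i j.castSucc + p.1 i j.succ = -(p.2 i.castSucc j + p.2 i.succ j) := by
  rw [LinearMap.mem_ker, funext_iff, Prod.forall]
  refine forall₂_congr fun i j ↦ ?_
  rw [eq_neg_iff_add_eq_zero, add_add_add_comm, ← add_assoc]
  rfl

theorem bijective_initialData_domRestrict_ker [Ring R] :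
    Function.Bijective ((initialData R m n).domRestrict (LinearMap.ker (vertexSum R m n))) := by
  rw [Function.bijective_iff_existsUnique]
  rintro ⟨a, g⟩
  choose f hf f_unique using fun i ↦ existsUnique_zero_eq_and_add_succ_eq (a i)
    fun j ↦ -(g i.castSucc j + g i.succ j)
  refine ⟨⟨(f, g), mem_ker_vertexSum_iff.2 fun i ↦ (hf i).2⟩,
    Prod.ext (funext fun i ↦ (hf i).1) rfl, ?_⟩
  rintro ⟨⟨f', g'⟩, h_ker⟩ h_data
  obtain ⟨rfl, rfl⟩ := Prod.mk.inj h_data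
  have hf' : f' = f := funext fun i ↦ f_unique i (f' i) ⟨rfl, mem_ker_vertexSum_iff.1 h_ker i⟩
  exact Subtype.ext (Prod.ext hf' rfl)

end EightVertex

theorem stmt_10_general (R : Type*) [Ring R] [StrongRankCondition R] (m n : ℕ) :
    ∃ φ : ((Fin m → Fin (n + 1) → R) × (Fin (m + 1) → Fin n → R)) →ₗ[R] (Fin m × Fin n → R),
      (∀ p (i : Fin m) (j : Fin n), φ p (i, j) =
        p.1 i j.castSucc + p.2 i.castSucc j + p.1 i j.succ + p.2 i.succ j) ∧
      Module.finrank R (LinearMap.ker φ) = m * n + m + n := by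
  refine ⟨vertexSum R m n, fun _ _ _ ↦ rfl, ?_⟩
  rw [(LinearEquiv.ofBijective _ bijective_initialData_domRestrict_ker).finrank_eq]
  simp only [Module.finrank_prod, Module.finrank_pi_fintype, Module.finrank_self,
    Finset.sum_const, Finset.card_univ, Fintype.card_fin, smul_eq_mul]
  ring

/-- The kernel of the 𝔽₂-linear map φ(f,g)_{i,j} = f_{i,j} + g_{i,j} + f_{i,j+1} + g_{i+1,j}
(i.e., the space of admissible eight-vertex states) has dimension mn + m + n over 𝔽₂. -/
theorem stmt_10 (m n : ℕ) (hm : 2 ≤ m) (hn : 2 ≤ n) :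
    ∃ φ : ((Fin m → Fin (n + 1) → ZMod 2) × (Fin (m + 1) → Fin n → ZMod 2)) →ₗ[ZMod 2]
        (Fin m × Fin n → ZMod 2),
      (∀ p (i : Fin m) (j : Fin n), φ p (i, j) =
        p.1 i j.castSucc + p.2 i.castSucc j + p.1 i j.succ + p.2 i.succ j) ∧
      Module.finrank (ZMod 2) (LinearMap.ker φ) = m * n + m + n :=
  stmt_10_general (ZMod 2) m n
end

section
/- Let m, n ≥ 2 be integers and let prescribed boundary values f_{i,1}, f_{i,n+1} (1 ≤ i ≤ m), g_{1,j}, g_{m+1,j} (1 ≤ j ≤ n) in 𝔽₂ satisfy Σ_{i=1}^{m} (f_{i,1} + f_{i,n+1}) + Σ_{j=1}^{n} (g_{1,j} + g_{m+1,j}) = 0. Then the number of admissible states of the eight-vertex model on the m×n lattice with exactly these boundary values is 2^{(m−1)(n−1)}. -/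
/-!
Over `𝔽₂` the vertex condition says that the edge values form a conserved flow, and a conserved
flow on a planar grid is the discrete curl of a height function on the faces, unique up to a
constant. Prescribing the flow on the boundary edges prescribes the height on the outer faces up to
that constant, which is consistent around the boundary exactly when the total flux vanishes, and the
heights of the `(m - 1) * (n - 1)` interior faces remain arbitrary.
-/

namespace EightVertex

open Cardinal

theorem partialSum_last {M : Type*} [AddCommMonoid M] {n : ℕ} (f : Fin n → M) :
    Fin.partialSum f (Fin.last n) = ∑ i, f i := by
  rw [Fin.partialSum, Fin.val_last, List.take_of_length_le (List.length_ofFn).le, List.sum_ofFn]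

theorem apply_eq_apply_zero {α : Type*} {n : ℕ} {u : Fin (n + 1) → α}
    (hu : ∀ i : Fin n, u i.succ = u i.castSucc) (i : Fin (n + 1)) : u i = u 0 := by
  induction i using Fin.induction with
  | zero => rfl
  | succ i ih => rw [hu, ih]

theorem mk_eq_off_finset {α A : Type*} (s : Finset α) (H : α → A) :
    #{h : α → A // ∀ x ∉ s, h x = H x} = lift #A ^ s.card := by
  classical
  have restrict_iff (h : α → A) :
      (∀ x ∉ s, h x = H x) ↔ h ∘ Subtype.val = fun x : {x // x ∉ s} => H x := by
    simp [funext_iff]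
  calc #{h : α → A // ∀ x ∉ s, h x = H x}
      = #({x // ¬x ∉ s} → A) := mk_congr <|
        (Equiv.subtypeEquivRight restrict_iff).trans (Equiv.subtypePreimage (· ∉ s) _)
    _ = lift #A ^ s.card := by simp

/-- A labelling of the edges of the `m × n` lattice: `p.1 i j` is the value `f_{i,j}` of a vertical
edge and `p.2 i j` the value `g_{i,j}` of a horizontal edge, with indices starting at `0`. -/
abbrev EdgeLabelling (m n : ℕ) (A : Type*) :=
  (Fin m → Fin (n + 1) → A) × (Fin (m + 1) → Fin n → A)

/-- The values of an edge labelling on the southern, northern, western and eastern boundary edges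
of the lattice. -/
def HasBoundary {m n : ℕ} {A : Type*} (p : EdgeLabelling m n A) (bS bN : Fin m → A)
    (bW bE : Fin n → A) : Prop :=
  (∀ i, p.1 i 0 = bS i ∧ p.1 i (Fin.last n) = bN i) ∧
    ∀ j, p.2 0 j = bW j ∧ p.2 (Fin.last m) j = bE j

/-- Conservation of flow at every vertex, flow being counted positively in the direction of
increasing indices. -/
def IsConserved {m n : ℕ} {A : Type*} [Add A] (p : EdgeLabelling m n A) : Prop :=
  ∀ i j, p.1 i j.castSucc + p.2 i.castSucc j = p.1 i j.succ + p.2 i.succ j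

theorem isConserved_iff_of_charTwo {m n : ℕ} {R : Type*} [Ring R] [CharP R 2]
    {p : EdgeLabelling m n R} :
    IsConserved p ↔
      ∀ i j, p.1 i j.castSucc + p.2 i.castSucc j + p.1 i j.succ + p.2 i.succ j = 0 :=
  forall₂_congr fun i j => by rw [add_assoc (_ + _), CharTwo.add_eq_zero]

/-- The faces of the `m × n` lattice, including the outer ones: the face `(i, j)` lies to the left
of the vertical edge `(i, j)` and below the horizontal edge `(i, j)`. -/
abbrev Face (m n : ℕ) := Fin (m + 1) × Fin (n + 1)

/-- The faces none of whose sides is a boundary edge. -/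
def interiorFaces (m n : ℕ) : Finset (Face (m + 1) (n + 1)) :=
  {0, Fin.last _}ᶜ ×ˢ {0, Fin.last _}ᶜ

theorem notMem_interiorFaces {m n : ℕ} {i : Fin (m + 2)} {j : Fin (n + 2)} :
    (i, j) ∉ interiorFaces m n ↔ (i = 0 ∨ i = Fin.last _) ∨ j = 0 ∨ j = Fin.last _ := by
  simp only [interiorFaces, Finset.mem_product, Finset.mem_compl, Finset.mem_insert,
    Finset.mem_singleton]
  tauto

theorem card_interiorFaces (m n : ℕ) : (interiorFaces m n).card = m * n := by
  have card_compl_ends (k : ℕ) : ({0, Fin.last (k + 1)}ᶜ : Finset (Fin (k + 2))).card = k := by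
    rw [Finset.card_compl, Finset.card_pair Fin.last_pos.ne, Fintype.card_fin, Nat.add_sub_cancel]
  rw [interiorFaces, Finset.card_product, card_compl_ends, card_compl_ends]

variable {A : Type*} [AddCommGroup A] {m n : ℕ}

/-- The discrete curl of a height function on the faces: the flow through an edge is the
difference of the heights on its two sides. -/
def curl (h : Face m n → A) : EdgeLabelling m n A :=
  (fun i j => h (i.succ, j) - h (i.castSucc, j), fun i j => h (i, j.castSucc) - h (i, j.succ))

theorem isConserved_curl (h : Face m n → A) : IsConserved (curl h) := fun i j => by
  simp only [curl]
  abel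

theorem IsConserved.exists_curl_eq {p : EdgeLabelling m n A} (hp : IsConserved p) (a : A) :
    ∃ h : Face m n → A, h (0, 0) = a ∧ curl h = p := by
  obtain ⟨f, g⟩ := p
  let h : Face m n → A := fun x =>
    a + Fin.partialSum (fun i => f i 0) x.1 - Fin.partialSum (g x.1) x.2
  have horizontal (i j) : h (i, j.castSucc) - h (i, j.succ) = g i j := by
    simp only [h, Fin.partialSum_succ]
    abel
  have vertical (i j) : h (i.succ, j) - h (i.castSucc, j) = f i j := by
    induction j using Fin.induction with
    | zero => simp [h, Fin.partialSum_succ]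
    | succ j ih =>
      have conserved : f i j.castSucc + g i.castSucc j = f i j.succ + g i.succ j := hp i j
      rw [← ih, ← horizontal, ← horizontal, ← sub_eq_iff_eq_add] at conserved
      rw [← conserved]
      abel
  exact ⟨h, by simp [h], Prod.ext (funext₂ vertical) (funext₂ horizontal)⟩

theorem curl_fst_eq_iff {h H : Face m n → A} {i : Fin m} {j : Fin (n + 1)} :
    (curl h).1 i j = (curl H).1 i j ↔ (h - H) (i.succ, j) = (h - H) (i.castSucc, j) :=
  sub_eq_sub_iff_sub_eq_sub

theorem curl_snd_eq_iff {h H : Face m n → A} {i : Fin (m + 1)} {j : Fin n} :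
    (curl h).2 i j = (curl H).2 i j ↔ (h - H) (i, j.succ) = (h - H) (i, j.castSucc) :=
  sub_eq_sub_iff_sub_eq_sub.trans eq_comm

theorem eq_of_curl_eq {h H : Face m n → A} (horigin : h (0, 0) = H (0, 0))
    (hcurl : curl h = curl H) : h = H := by
  rw [← sub_eq_zero]
  ext ⟨i, j⟩
  calc (h - H) (i, j)
      = (h - H) (i, 0) := apply_eq_apply_zero (u := fun j => (h - H) (i, j))
        (fun j => curl_snd_eq_iff.1 (by rw [hcurl])) j
    _ = (h - H) (0, 0) := apply_eq_apply_zero (u := fun i => (h - H) (i, 0))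
        (fun i => curl_fst_eq_iff.1 (by rw [hcurl])) i
    _ = 0 := sub_eq_zero.2 horigin

section Boundary

variable {bS bN : Fin (m + 1) → A} {bW bE : Fin (n + 1) → A}

theorem exists_hasBoundary_curl
    (hflux : ∑ i, bS i + ∑ j, bW j = ∑ i, bN i + ∑ j, bE j) :
    ∃ H : Face (m + 1) (n + 1) → A, HasBoundary (curl H) bS bN bW bE := by
  let H : Face (m + 1) (n + 1) → A := fun x =>
    if x.1 = Fin.last _ then ∑ i, bS i - Fin.partialSum bE x.2
    else if x.2 = Fin.last _ then Fin.partialSum bN x.1 - ∑ j, bW j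
    else Fin.partialSum bS x.1 - Fin.partialSum bW x.2
  have south (i) : H (i, 0) = Fin.partialSum bS i := by
    by_cases hi : i = Fin.last _ <;> simp [H, hi, partialSum_last]
  have north (i) : H (i, Fin.last _) = Fin.partialSum bN i - ∑ j, bW j := by
    by_cases hi : i = Fin.last _
    · simp [H, hi, partialSum_last, sub_eq_sub_iff_add_eq_add, hflux]
    · simp [H, hi]
  have west (j) : H (0, j) = -Fin.partialSum bW j := by
    by_cases hj : j = Fin.last _ <;> simp [H, hj, partialSum_last]
  have east (j) : H (Fin.last _, j) = ∑ i, bS i - Fin.partialSum bE j := by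
    simp [H]
  refine ⟨H, fun i => ⟨?_, ?_⟩, fun j => ⟨?_, ?_⟩⟩
  · simp [curl, south, Fin.partialSum_succ]
  · simp [curl, north, Fin.partialSum_succ]
  · simp [curl, west, Fin.partialSum_succ]
  · simp [curl, east, Fin.partialSum_succ]

theorem hasBoundary_curl_of_eq_off_interiorFaces {h H : Face (m + 1) (n + 1) → A}
    (hH : HasBoundary (curl H) bS bN bW bE) (heq : ∀ x ∉ interiorFaces m n, h x = H x) :
    HasBoundary (curl h) bS bN bW bE := by
  have heq' (i j) (hij : (i = 0 ∨ i = Fin.last _) ∨ j = 0 ∨ j = Fin.last _) :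
      h (i, j) = H (i, j) := heq _ (notMem_interiorFaces.2 hij)
  simpa [HasBoundary, curl, heq'] using hH

theorem eq_off_interiorFaces_of_hasBoundary_curl {h H : Face (m + 1) (n + 1) → A}
    (horigin : h (0, 0) = H (0, 0)) (hh : HasBoundary (curl h) bS bN bW bE)
    (hH : HasBoundary (curl H) bS bN bW bE) : ∀ x ∉ interiorFaces m n, h x = H x := by
  have origin : (h - H) (0, 0) = 0 := sub_eq_zero.2 horigin
  have south (i) : (h - H) (i, 0) = 0 :=
    (apply_eq_apply_zero (u := fun i => (h - H) (i, 0)) (fun i => curl_fst_eq_iff.1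
      ((hh.1 i).1.trans (hH.1 i).1.symm)) i).trans origin
  have west (j) : (h - H) (0, j) = 0 :=
    (apply_eq_apply_zero (u := fun j => (h - H) (0, j)) (fun j => curl_snd_eq_iff.1
      ((hh.2 j).1.trans (hH.2 j).1.symm)) j).trans origin
  have north (i) : (h - H) (i, Fin.last _) = 0 :=
    (apply_eq_apply_zero (u := fun i => (h - H) (i, Fin.last _)) (fun i => curl_fst_eq_iff.1
      ((hh.1 i).2.trans (hH.1 i).2.symm)) i).trans (west _)
  have east (j) : (h - H) (Fin.last _, j) = 0 :=
    (apply_eq_apply_zero (u := fun j => (h - H) (Fin.last _, j)) (fun j => curl_snd_eq_iff.1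
      ((hh.2 j).2.trans (hH.2 j).2.symm)) j).trans (south _)
  rintro ⟨i, j⟩ hij
  rw [← sub_eq_zero]
  obtain (rfl | rfl) | rfl | rfl := notMem_interiorFaces.1 hij
  exacts [west j, east j, south i, north i]

theorem bijective_curl {H : Face (m + 1) (n + 1) → A} (hH : HasBoundary (curl H) bS bN bW bE) :
    Function.Bijective fun h : {h // ∀ x ∉ interiorFaces m n, h x = H x} =>
      (⟨curl h.1, isConserved_curl h.1, hasBoundary_curl_of_eq_off_interiorFaces hH h.2⟩ :
        {p // IsConserved p ∧ HasBoundary p bS bN bW bE}) := by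
  constructor
  · rintro ⟨h, heq⟩ ⟨h', heq'⟩ hcurl
    have horigin : (0, 0) ∉ interiorFaces m n := notMem_interiorFaces.2 (.inl (.inl rfl))
    exact Subtype.ext (eq_of_curl_eq ((heq _ horigin).trans (heq' _ horigin).symm)
      (congrArg Subtype.val hcurl))
  · rintro ⟨p, hp, hboundary⟩
    obtain ⟨h, horigin, rfl⟩ := hp.exists_curl_eq (H (0, 0))
    exact ⟨⟨h, eq_off_interiorFaces_of_hasBoundary_curl horigin hboundary hH⟩, rfl⟩

end Boundary

end EightVertex

open Cardinal EightVertex in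
theorem stmt_13_general {A : Type*} [AddCommGroup A] {m n : ℕ} (bS bN : Fin (m + 1) → A)
    (bW bE : Fin (n + 1) → A) (hflux : ∑ i, bS i + ∑ j, bW j = ∑ i, bN i + ∑ j, bE j) :
    #{p : EdgeLabelling (m + 1) (n + 1) A // IsConserved p ∧ HasBoundary p bS bN bW bE} =
      #A ^ (m * n) := by
  obtain ⟨H, hH⟩ := exists_hasBoundary_curl hflux
  rw [← mk_congr (Equiv.ofBijective _ (bijective_curl hH)), mk_eq_off_finset, card_interiorFaces,
    lift_id']

/-- For any boundary values summing to 0 in 𝔽₂, the number of admissible eight-vertex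
states with exactly these boundary values is 2^((m−1)(n−1)). -/
theorem stmt_13 (m n : ℕ) (hm : 2 ≤ m) (hn : 2 ≤ n)
    (bS bN : Fin m → ZMod 2) (bW bE : Fin n → ZMod 2)
    (hsum : ∑ i, (bS i + bN i) + ∑ j, (bW j + bE j) = 0) :
    Nat.card {p : (Fin m → Fin (n + 1) → ZMod 2) × (Fin (m + 1) → Fin n → ZMod 2) //
      (∀ (i : Fin m) (j : Fin n),
        p.1 i j.castSucc + p.2 i.castSucc j + p.1 i j.succ + p.2 i.succ j = 0) ∧
      (∀ i : Fin m, p.1 i 0 = bS i ∧ p.1 i (Fin.last n) = bN i) ∧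
      (∀ j : Fin n, p.2 0 j = bW j ∧ p.2 (Fin.last m) j = bE j)} =
    2 ^ ((m - 1) * (n - 1)) := by
  obtain ⟨m, rfl⟩ := Nat.exists_eq_add_of_le' (one_le_two.trans hm)
  obtain ⟨n, rfl⟩ := Nat.exists_eq_add_of_le' (one_le_two.trans hn)
  rw [Finset.sum_add_distrib, Finset.sum_add_distrib, add_add_add_comm, CharTwo.add_eq_zero] at hsum
  simp only [← EightVertex.isConserved_iff_of_charTwo]
  exact (congrArg Cardinal.toNat (stmt_13_general bS bN bW bE hsum)).trans (by simp)
end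

section
/- Let F be a field and let R, S, T be eight-vertex matrices over F satisfying the Yang–Baxter commutator relation [[R, S, T]] = 0. Then the following four equations hold: c₁(T)c₋₁(S)c₁(R) = c₋₁(T)c₁(S)c₋₁(R); d₁(T)c₁(S)d₋₁(R) = d₋₁(T)c₋₁(S)d₁(R); c₁(T)d₁(S)d₋₁(R) = c₋₁(T)d₋₁(S)d₁(R); and d₁(T)d₋₁(S)c₁(R) = d₋₁(T)d₁(S)c₋₁(R). -/
/-- The operator φ₁₂ acting on factors 1 and 2 of V⊗V⊗V, as a matrix (row = output
index, column = input index; the entry at row (θ,γ), column (ν,β) of `R` is R_{νβ}^{θγ}). -/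
def op12 {F : Type*} [Field F] (R : Matrix (Fin 2 × Fin 2) (Fin 2 × Fin 2) F) :
    Matrix (Fin 2 × Fin 2 × Fin 2) (Fin 2 × Fin 2 × Fin 2) F :=
  Matrix.of fun p q => if p.2.2 = q.2.2 then R (p.1, p.2.1) (q.1, q.2.1) else 0

/-- The operator φ₁₃ acting on factors 1 and 3 of V⊗V⊗V. -/
def op13 {F : Type*} [Field F] (R : Matrix (Fin 2 × Fin 2) (Fin 2 × Fin 2) F) :
    Matrix (Fin 2 × Fin 2 × Fin 2) (Fin 2 × Fin 2 × Fin 2) F :=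
  Matrix.of fun p q => if p.2.1 = q.2.1 then R (p.1, p.2.2) (q.1, q.2.2) else 0

/-- The operator φ₂₃ acting on factors 2 and 3 of V⊗V⊗V. -/
def op23 {F : Type*} [Field F] (R : Matrix (Fin 2 × Fin 2) (Fin 2 × Fin 2) F) :
    Matrix (Fin 2 × Fin 2 × Fin 2) (Fin 2 × Fin 2 × Fin 2) F :=
  Matrix.of fun p q => if p.1 = q.1 then R (p.2.1, p.2.2) (q.2.1, q.2.2) else 0

/-- An eight-vertex matrix: R_{νβ}^{θγ} = 0 whenever ν + β ≢ θ + γ (mod 2). -/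
def EightVertex {F : Type*} [Field F]
    (R : Matrix (Fin 2 × Fin 2) (Fin 2 × Fin 2) F) : Prop :=
  ∀ ν β θ γ : Fin 2, (ν.val + β.val) % 2 ≠ (θ.val + γ.val) % 2 → R (θ, γ) (ν, β) = 0

/-- The Boltzmann weight a_i (i = ±1): a₁(R) = R_{00}^{00}, a₋₁(R) = R_{11}^{11}. -/
def wa {F : Type*} [Field F] (R : Matrix (Fin 2 × Fin 2) (Fin 2 × Fin 2) F) (i : ℤ) : F :=
  if i = 1 then R (0, 0) (0, 0) else R (1, 1) (1, 1)

/-- The Boltzmann weight b_i (i = ±1): b₁(R) = R_{01}^{01}, b₋₁(R) = R_{10}^{10}. -/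
def wb {F : Type*} [Field F] (R : Matrix (Fin 2 × Fin 2) (Fin 2 × Fin 2) F) (i : ℤ) : F :=
  if i = 1 then R (0, 1) (0, 1) else R (1, 0) (1, 0)

/-- The Boltzmann weight c_i (i = ±1): c₁(R) = R_{10}^{01}, c₋₁(R) = R_{01}^{10}. -/
def wc {F : Type*} [Field F] (R : Matrix (Fin 2 × Fin 2) (Fin 2 × Fin 2) F) (i : ℤ) : F :=
  if i = 1 then R (0, 1) (1, 0) else R (1, 0) (0, 1)

/-- The Boltzmann weight d_i (i = ±1): d₁(R) = R_{11}^{00}, d₋₁(R) = R_{00}^{11}. -/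
def wd {F : Type*} [Field F] (R : Matrix (Fin 2 × Fin 2) (Fin 2 × Fin 2) F) (i : ℤ) : F :=
  if i = 1 then R (0, 0) (1, 1) else R (1, 1) (0, 0)

/-! A diagonal entry of `R₁₂ S₁₃ T₂₃` is a sum over closed paths `p → p` in `(ℤ/2)³`: first `T` acts
on the last two coordinates, then `S` on the outer two, then `R` on the first two. Parity makes `T`
and `S` flip both or neither of their coordinates, and the third coordinate is touched only by `T`
and `S`, so either nothing flips or all three operators flip. The path without flips contributes
the same to both sides of the Yang–Baxter equation; cancelling it leaves one relation between
monomials for each `p`. -/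

open scoped Matrix

section

variable {F : Type*} [Field F]

theorem op12_transpose (M : Matrix (Fin 2 × Fin 2) (Fin 2 × Fin 2) F) :
    op12 Mᵀ = (op12 M)ᵀ := by
  ext p q
  simp only [op12, Matrix.of_apply, Matrix.transpose_apply, eq_comm]

theorem op13_transpose (M : Matrix (Fin 2 × Fin 2) (Fin 2 × Fin 2) F) :
    op13 Mᵀ = (op13 M)ᵀ := by
  ext p q
  simp only [op13, Matrix.of_apply, Matrix.transpose_apply, eq_comm]

theorem op23_transpose (M : Matrix (Fin 2 × Fin 2) (Fin 2 × Fin 2) F) :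
    op23 Mᵀ = (op23 M)ᵀ := by
  ext p q
  simp only [op23, Matrix.of_apply, Matrix.transpose_apply, eq_comm]

theorem op23_mul_op13_mul_op12_eq_transpose (R S T : Matrix (Fin 2 × Fin 2) (Fin 2 × Fin 2) F) :
    op23 T * op13 S * op12 R = (op12 Rᵀ * op13 Sᵀ * op23 Tᵀ)ᵀ := by
  simp only [op12_transpose, op13_transpose, op23_transpose, Matrix.transpose_mul,
    Matrix.transpose_transpose, Matrix.mul_assoc]

theorem op12_mul_op13_mul_op23_apply (R S T : Matrix (Fin 2 × Fin 2) (Fin 2 × Fin 2) F)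
    (p q : Fin 2 × Fin 2 × Fin 2) :
    (op12 R * op13 S * op23 T) p q =
      ∑ y, ∑ z, (∑ x, R (p.1, p.2.1) (x, y) * S (x, p.2.2) (q.1, z)) * T (y, z) (q.2.1, q.2.2) := by
  simp [op12, op13, op23, Matrix.mul_apply, Fintype.sum_prod_type, -Fin.sum_univ_two]

theorem sum_fin_two_eq_add_add_one {A : Type*} [AddCommMonoid A] (f : Fin 2 → A) (a : Fin 2) :
    ∑ i, f i = f a + f (a + 1) := by
  fin_cases a <;> simp [Fin.sum_univ_two, add_comm]

namespace EightVertex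

variable {M : Matrix (Fin 2 × Fin 2) (Fin 2 × Fin 2) F}

theorem transpose (hM : EightVertex M) : EightVertex Mᵀ :=
  fun ν β θ γ h => hM θ γ ν β h.symm

theorem apply_eq_zero (hM : EightVertex M) {ν β θ γ : Fin 2} (h : ν + β ≠ θ + γ) :
    M (θ, γ) (ν, β) = 0 :=
  hM ν β θ γ fun h' => h (Fin.ext h')

theorem sum_mul_apply_left (hM : EightVertex M) (f : Fin 2 → F) (θ ν β : Fin 2) :
    ∑ x, f x * M (x, θ) (ν, β) = f (ν + β + θ) * M (ν + β + θ, θ) (ν, β) :=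
  Fintype.sum_eq_single _ fun x hx => by
    rw [hM.apply_eq_zero (by revert x ν β θ; decide), mul_zero]

theorem sum_sum_mul_apply (hM : EightVertex M) (f : Fin 2 → Fin 2 → F) (ν β : Fin 2) :
    ∑ x, ∑ y, f x y * M (x, y) (ν, β) =
      f ν β * M (ν, β) (ν, β) + f (ν + 1) (β + 1) * M (ν + 1, β + 1) (ν, β) := by
  rw [Finset.sum_comm, sum_fin_two_eq_add_add_one _ β, hM.sum_mul_apply_left, hM.sum_mul_apply_left]
  have h₁ : ν + β + β = ν := by revert ν β; decide
  have h₂ : ν + β + (β + 1) = ν + 1 := by revert ν β; decide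
  rw [h₁, h₂]

end EightVertex

theorem op12_mul_op13_mul_op23_apply_self (R : Matrix (Fin 2 × Fin 2) (Fin 2 × Fin 2) F)
    {S T : Matrix (Fin 2 × Fin 2) (Fin 2 × Fin 2) F} (hS : EightVertex S) (hT : EightVertex T)
    (α β γ : Fin 2) :
    (op12 R * op13 S * op23 T) (α, β, γ) (α, β, γ) =
      R (α, β) (α, β) * S (α, γ) (α, γ) * T (β, γ) (β, γ) +
        R (α, β) (α + 1, β + 1) * S (α + 1, γ) (α, γ + 1) * T (β + 1, γ + 1) (β, γ) := by
  have h_keep : α + γ + γ = α := by revert α γ; decide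
  have h_flip : α + (γ + 1) + γ = α + 1 := by revert α γ; decide
  rw [op12_mul_op13_mul_op23_apply, hT.sum_sum_mul_apply, hS.sum_mul_apply_left,
    hS.sum_mul_apply_left, h_keep, h_flip]

theorem op23_mul_op13_mul_op12_apply_self (R : Matrix (Fin 2 × Fin 2) (Fin 2 × Fin 2) F)
    {S T : Matrix (Fin 2 × Fin 2) (Fin 2 × Fin 2) F} (hS : EightVertex S) (hT : EightVertex T)
    (α β γ : Fin 2) :
    (op23 T * op13 S * op12 R) (α, β, γ) (α, β, γ) =
      R (α, β) (α, β) * S (α, γ) (α, γ) * T (β, γ) (β, γ) +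
        R (α + 1, β + 1) (α, β) * S (α, γ + 1) (α + 1, γ) * T (β, γ) (β + 1, γ + 1) := by
  rw [op23_mul_op13_mul_op12_eq_transpose, Matrix.transpose_apply,
    op12_mul_op13_mul_op23_apply_self _ hS.transpose hT.transpose]
  simp only [Matrix.transpose_apply]

theorem flip_mul_flip_mul_flip_eq {R S T : Matrix (Fin 2 × Fin 2) (Fin 2 × Fin 2) F}
    (hS : EightVertex S) (hT : EightVertex T) {α β γ : Fin 2}
    (h : (op12 R * op13 S * op23 T) (α, β, γ) (α, β, γ) =
      (op23 T * op13 S * op12 R) (α, β, γ) (α, β, γ)) :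
    R (α, β) (α + 1, β + 1) * S (α + 1, γ) (α, γ + 1) * T (β + 1, γ + 1) (β, γ) =
      R (α + 1, β + 1) (α, β) * S (α, γ + 1) (α + 1, γ) * T (β, γ) (β + 1, γ + 1) := by
  rwa [op12_mul_op13_mul_op23_apply_self R hS hT, op23_mul_op13_mul_op12_apply_self R hS hT,
    add_right_inj] at h

end

theorem stmt_17_general {F : Type*} [Field F]
    {R S T : Matrix (Fin 2 × Fin 2) (Fin 2 × Fin 2) F}
    (hS : EightVertex S) (hT : EightVertex T)
    (hdiag : (op12 R * op13 S * op23 T).diag = (op23 T * op13 S * op12 R).diag) :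
    wc T 1 * wc S (-1) * wc R 1 = wc T (-1) * wc S 1 * wc R (-1) ∧
    wd T 1 * wc S 1 * wd R (-1) = wd T (-1) * wc S (-1) * wd R 1 ∧
    wc T 1 * wd S 1 * wd R (-1) = wc T (-1) * wd S (-1) * wd R 1 ∧
    wd T 1 * wd S (-1) * wc R 1 = wd T (-1) * wd S 1 * wc R (-1) := by
  have hflip (α β γ : Fin 2) := flip_mul_flip_mul_flip_eq hS hT (congrFun hdiag (α, β, γ))
  have h₀₀₀ : wd R 1 * wc S (-1) * wd T (-1) = wd R (-1) * wc S 1 * wd T 1 := hflip 0 0 0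
  have h₀₀₁ : wd R 1 * wd S (-1) * wc T (-1) = wd R (-1) * wd S 1 * wc T 1 := hflip 0 0 1
  have h₀₁₀ : wc R 1 * wc S (-1) * wc T 1 = wc R (-1) * wc S 1 * wc T (-1) := hflip 0 1 0
  have h₁₀₀ : wc R (-1) * wd S 1 * wd T (-1) = wc R 1 * wd S (-1) * wd T 1 := hflip 1 0 0
  refine ⟨?_, ?_, ?_, ?_⟩
  · linear_combination h₀₁₀
  · linear_combination -h₀₀₀
  · linear_combination -h₀₀₁
  · linear_combination -h₁₀₀

/-- Equations (7)–(10): for eight-vertex matrices with [[R,S,T]] = 0 we have the four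
c/d relations. -/
theorem stmt_17 (F : Type*) [Field F]
    (R S T : Matrix (Fin 2 × Fin 2) (Fin 2 × Fin 2) F)
    (hR : EightVertex R) (hS : EightVertex S) (hT : EightVertex T)
    (hybe : op12 R * op13 S * op23 T = op23 T * op13 S * op12 R) :
    wc T 1 * wc S (-1) * wc R 1 = wc T (-1) * wc S 1 * wc R (-1) ∧
    wd T 1 * wc S 1 * wd R (-1) = wd T (-1) * wc S (-1) * wd R 1 ∧
    wc T 1 * wd S 1 * wd R (-1) = wc T (-1) * wd S (-1) * wd R 1 ∧
    wd T 1 * wd S (-1) * wc R 1 = wd T (-1) * wd S 1 * wc R (-1) :=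
  stmt_17_general hS hT (congrArg Matrix.diag hybe)
end

section
/- Let F be a field, and let S, T be eight-vertex matrices over F all sixteen of whose Boltzmann weights a_{±1}(S), b_{±1}(S), c_{±1}(S), d_{±1}(S), a_{±1}(T), b_{±1}(T), c_{±1}(T), d_{±1}(T) are nonzero. Suppose there exists an eight-vertex matrix R over F with c₁(R), c₋₁(R), d₁(R), d₋₁(R) all nonzero such that [[R, S, T]] = 0. Then: (i) a₁(T)b₁(T)F(S) = a₋₁(T)b₋₁(T)F(S); (ii) a₁(S)b₁(S)F(T) = a₋₁(S)b₋₁(S)F(T); (iii) for each i ∈ {1, −1}, c_i(T)d_{−i}(T)·G_i(S,T)² = c_{−i}(T)d_i(T)·[a₁(T)b₁(T)F(S) − a₁(S)b₁(S)F(T)]²; and (iv) c₁(T)c₋₁(S)·d₋₁(T)d₁(S) = d₁(T)d₋₁(S)·c₋₁(T)c₁(S). -/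
/-- F(ψ) = a₁a₋₁ + b₁b₋₁ − c₁c₋₁ − d₁d₋₁. -/
def Fwt {F : Type*} [Field F] (ψ : Matrix (Fin 2 × Fin 2) (Fin 2 × Fin 2) F) : F :=
  wa ψ 1 * wa ψ (-1) + wb ψ 1 * wb ψ (-1) - wc ψ 1 * wc ψ (-1) - wd ψ 1 * wd ψ (-1)

/-- G_i(S,T) = c_{−i}(T)d_i(T)[b₋₁(S)a₁(S) + a₋₁(S)b₁(S)]
             − c_{−i}(S)d_i(S)[b₋₁(T)a₁(T) + a₋₁(T)b₁(T)]. -/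
def Gwt {F : Type*} [Field F] (i : ℤ)
    (S T : Matrix (Fin 2 × Fin 2) (Fin 2 × Fin 2) F) : F :=
  wc T (-i) * wd T i * (wb S (-1) * wa S 1 + wa S (-1) * wb S 1) -
    wc S (-i) * wd S i * (wb T (-1) * wa T 1 + wa T (-1) * wb T 1)

/-!
Indexing the weights by pairs of spins makes the Yang–Baxter equation covariant under reversal of
each of the three spins, and stable under reversing the order of the tensor factors and under
crossing. Its entries then combine into one identity: up to nonzero `c`- and `d`-weights, `G_i`
equals any of the four defects `T.rowProd j * F(S) - S.rowProd i * F(T)`, and defects at opposite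
spins `(i, j)` are equal. Hence `X = F(S) (a₁ b₁ - a₋₁ b₋₁)(T)` equals
`Y = F(T) (a₁ b₁ - a₋₁ b₋₁)(S)`, and `2X = 0`.

In characteristic two suppose `X ≠ 0`. Then `a₁ + a₋₁ + b₁ + b₋₁` vanishes for `R`, `S` and `T`,
each matrix is governed by `α = a₁ + a₋₁` and `β = a₁ + b₋₁`, and `X = Y` reads
`F(S) α_T β_T = F(T) α_S β_S`. There is a polynomial `K` in the `α`s and `β`s, invariant under the
symmetries, with `α_R α_T F(S) = α_S K`. Combining the symmetric images of `X = Y` gives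
`K α_R α_S α_T = 0`, so `α_R = 0`, and then a direct computation gives `F(S) α_S β_T = 0`.
-/

/-- The Boltzmann weights of an eight-vertex matrix, indexed by the pair of spins of a row:
`diag i j` is the weight preserving the spins `(i, j)` and `flip i j` the one reversing both. Thus
`a₁ = diag 0 0`, `a₋₁ = diag 1 1`, `b₁ = diag 0 1`, `b₋₁ = diag 1 0`, `c₁ = flip 0 1`,
`c₋₁ = flip 1 0`, `d₁ = flip 0 0`, `d₋₁ = flip 1 1`. -/
structure SpinWeights (A : Type*) where
  diag : Fin 2 → Fin 2 → A
  flip : Fin 2 → Fin 2 → A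

namespace SpinWeights

section Definitions

variable {A : Type*}

/-- The weights read off from a matrix on the tensor square. -/
def ofMatrix (R : Matrix (Fin 2 × Fin 2) (Fin 2 × Fin 2) A) : SpinWeights A where
  diag i j := R (i, j) (i, j)
  flip i j := R (i, j) (i.rev, j.rev)

/-- Conjugation by the exchange of the two tensor factors. -/
def swap (w : SpinWeights A) : SpinWeights A where
  diag i j := w.diag j i
  flip i j := w.flip j i

/-- Transposition in the first tensor factor (crossing). -/
def partialTranspose (w : SpinWeights A) : SpinWeights A where
  diag := w.diag
  flip i j := w.flip i.rev j

variable [CommRing A]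

/-- The free-fermion quantity `a₁ a₋₁ + b₁ b₋₁ - c₁ c₋₁ - d₁ d₋₁`. -/
def freeFermion (w : SpinWeights A) : A :=
  w.diag 0 0 * w.diag 1 1 + w.diag 0 1 * w.diag 1 0 - w.flip 0 1 * w.flip 1 0 -
    w.flip 0 0 * w.flip 1 1

/-- The product of the diagonal weights with first spin `i`: `a₁ b₁` or `a₋₁ b₋₁`. -/
def rowProd (w : SpinWeights A) (i : Fin 2) : A := w.diag i 0 * w.diag i 1

/-- The sum `b₋₁ a₁ + a₋₁ b₁` of the products of the diagonal weights with equal second spin. -/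
def colProdSum (w : SpinWeights A) : A := w.diag 1 0 * w.diag 0 0 + w.diag 1 1 * w.diag 0 1

/-- The product of the flip weights with second spin `k`: `c₋₁ d₁` or `c₁ d₋₁`. -/
def flipProd (w : SpinWeights A) (k : Fin 2) : A := w.flip 1 k * w.flip 0 k

/-- The polynomial `G₁` for `k = 0` and `G₋₁` for `k = 1`. -/
def bracket (S T : SpinWeights A) (k : Fin 2) : A :=
  T.flipProd k * S.colProdSum - S.flipProd k * T.colProdSum

/-- The difference measuring how far the `rowProd`s at `j` and `i` are from being proportional to
the free-fermion quantities. -/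
def rowDefect (S T : SpinWeights A) (i j : Fin 2) : A :=
  T.rowProd j * S.freeFermion - S.rowProd i * T.freeFermion

/-- The sum `a₁ + b₁ + b₋₁ + a₋₁` of the diagonal weights. -/
def total (w : SpinWeights A) : A := w.diag 0 0 + w.diag 0 1 + w.diag 1 0 + w.diag 1 1

/-- The sum `a₁ + a₋₁`, written `α` above. -/
def diagSum (w : SpinWeights A) : A := w.diag 0 0 + w.diag 1 1

/-- The sum `a₁ + b₋₁`, written `β` above. -/
def colSum (w : SpinWeights A) : A := w.diag 0 0 + w.diag 1 0

/-- The combination `α_S β_T + β_S α_T`, which in characteristic two relates the flip weights of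
three matrices satisfying the Yang–Baxter equation. -/
def mixedSum (S T : SpinWeights A) : A := S.diagSum * T.colSum + S.colSum * T.diagSum

/-- The polynomial `K` of the characteristic two argument: for vanishing `total`s it is invariant
under the symmetries of the Yang–Baxter equation. -/
def invariantSum (R S T : SpinWeights A) : A :=
  R.diagSum * S.colSum * T.diagSum + R.colSum * S.diagSum * T.colSum +
    R.colSum * S.colSum * T.diagSum + R.diagSum * S.colSum * T.colSum

end Definitions

section CommRing

variable {A : Type*} [CommRing A] (w : SpinWeights A)

lemma freeFermion_eq (i j : Fin 2) :
    w.freeFermion = w.diag i j * w.diag i.rev j.rev + w.diag i j.rev * w.diag i.rev j -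
      w.flip i j * w.flip i.rev j.rev - w.flip i j.rev * w.flip i.rev j := by
  fin_cases i <;> fin_cases j <;>
    simp only [freeFermion, Fin.zero_eta, Fin.mk_one, Fin.reduceRev] <;> ring

lemma rowProd_eq (i k : Fin 2) : w.rowProd i = w.diag i k * w.diag i k.rev := by
  fin_cases k <;> simp only [rowProd, Fin.zero_eta, Fin.mk_one, Fin.reduceRev, mul_comm]

lemma colProdSum_eq (i k : Fin 2) :
    w.colProdSum = w.diag i k * w.diag i.rev k + w.diag i k.rev * w.diag i.rev k.rev := by
  fin_cases i <;> fin_cases k <;>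
    simp only [colProdSum, Fin.zero_eta, Fin.mk_one, Fin.reduceRev] <;> ring

lemma flipProd_eq (i k : Fin 2) : w.flipProd k = w.flip i k * w.flip i.rev k := by
  fin_cases i <;> simp only [flipProd, Fin.zero_eta, Fin.mk_one, Fin.reduceRev, mul_comm]

lemma freeFermion_swap : w.swap.freeFermion = w.freeFermion := by
  simp only [freeFermion, swap]
  ring

lemma freeFermion_partialTranspose : w.partialTranspose.freeFermion = w.freeFermion := by
  simp only [freeFermion, partialTranspose, Fin.reduceRev]
  ring

lemma total_swap : w.swap.total = w.total := by
  simp only [total, swap]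
  ring

end CommRing

section CharTwo

variable {A : Type*} [CommRing A] [CharP A 2] {w R S T : SpinWeights A}

lemma diag_one_one_of_total_eq_zero (hw : w.total = 0) :
    w.diag 1 1 = w.diag 0 0 + w.diag 0 1 + w.diag 1 0 :=
  (CharTwo.add_eq_zero.1 hw).symm

lemma colSum_swap_of_total_eq_zero (hw : w.total = 0) :
    w.swap.colSum = w.diagSum + w.colSum := by
  simp only [colSum, swap, diagSum, diag_one_one_of_total_eq_zero hw]
  grind

lemma rowProd_zero_sub_rowProd_one_of_total_eq_zero (hw : w.total = 0) :
    w.rowProd 0 - w.rowProd 1 = w.diagSum * w.colSum := by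
  simp only [colSum, rowProd, diagSum, diag_one_one_of_total_eq_zero hw]
  grind

lemma freeFermion_of_total_eq_zero (hw : w.total = 0) :
    w.freeFermion = w.colSum * (w.diagSum + w.colSum) +
      (w.flip 0 0 * w.flip 1 1 + w.flip 0 1 * w.flip 1 0) := by
  simp only [colSum, freeFermion, diagSum, diag_one_one_of_total_eq_zero hw]
  grind

lemma mixedSum_swap_swap (hS : S.total = 0) (hT : T.total = 0) :
    mixedSum S.swap T.swap = mixedSum T S := by
  simp only [mixedSum, colSum_swap_of_total_eq_zero hS, colSum_swap_of_total_eq_zero hT]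
  simp only [diagSum, swap]
  grind

lemma invariantSum_reverse (hR : R.total = 0) (hS : S.total = 0) (hT : T.total = 0) :
    invariantSum T.swap S.swap R.swap = invariantSum R S T := by
  simp only [invariantSum, colSum_swap_of_total_eq_zero, hR, hS, hT]
  simp only [diagSum, swap]
  grind

lemma invariantSum_cross (hT : T.total = 0) :
    invariantSum S.partialTranspose R.partialTranspose T.swap = invariantSum R S T := by
  simp only [invariantSum, colSum_swap_of_total_eq_zero hT]
  simp only [diagSum, swap, colSum, partialTranspose]
  grind

end CharTwo

end SpinWeights

open SpinWeights

/-- The entries of the Yang–Baxter equation for eight-vertex matrices with weights `R`, `S`, `T`,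
in row `(i, j, k)`; the name of a field says which of the three spins are reversed in the column.
The remaining entries are trivial. -/
structure YangBaxter {A : Type*} [CommRing A] (R S T : SpinWeights A) : Prop where
  flip_none (i j k : Fin 2) :
    R.flip i j * S.flip i.rev k * T.flip j.rev k.rev =
      R.flip i.rev j.rev * S.flip i k.rev * T.flip j k
  flip₁₂ (i j k : Fin 2) :
    R.diag i j * S.flip i k * T.flip j k.rev + R.flip i j * S.diag i.rev k * T.diag j.rev k =
      R.diag i.rev j.rev * S.flip i k.rev * T.flip j k + R.flip i j * S.diag i k * T.diag j k
  flip₁₃ (i j k : Fin 2) :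
    R.diag i j * S.flip i k * T.diag j k.rev + R.flip i j * S.diag i.rev k * T.flip j.rev k =
      R.diag i.rev j * S.flip i k * T.diag j k + R.flip i j.rev * S.diag i k.rev * T.flip j k
  flip₂₃ (i j k : Fin 2) :
    R.diag i j * S.diag i k * T.flip j k + R.flip i j * S.flip i.rev k * T.diag j.rev k.rev =
      R.diag i j.rev * S.diag i k.rev * T.flip j k + R.flip i.rev j * S.flip i k * T.diag j k

namespace YangBaxter

section CommRing

variable {A : Type*} [CommRing A] {R S T : SpinWeights A}

lemma reverse (h : YangBaxter R S T) : YangBaxter T.swap S.swap R.swap where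
  flip_none i j k := by
    simp only [swap]
    linear_combination -h.flip_none k j i
  flip₁₂ i j k := by
    simp only [swap]
    linear_combination -h.flip₂₃ k j i
  flip₁₃ i j k := by
    simp only [swap]
    linear_combination -h.flip₁₃ k j i
  flip₂₃ i j k := by
    simp only [swap]
    linear_combination -h.flip₁₂ k j i

lemma cross (h : YangBaxter R S T) :
    YangBaxter S.partialTranspose R.partialTranspose T.swap where
  flip_none i j k := by
    simp only [swap, partialTranspose, Fin.rev_rev]
    linear_combination h.flip_none i k j
  flip₁₂ i j k := by
    have e := h.flip₁₃ i.rev k j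
    simp only [Fin.rev_rev] at e
    simp only [swap, partialTranspose]
    linear_combination e
  flip₁₃ i j k := by
    have e := h.flip₁₂ i.rev k j
    simp only [Fin.rev_rev] at e
    simp only [swap, partialTranspose]
    linear_combination e
  flip₂₃ i j k := by
    simp only [swap, partialTranspose, Fin.rev_rev]
    linear_combination h.flip₂₃ i k j

lemma flip_mul_bracket (h : YangBaxter R S T) (i j k : Fin 2) :
    T.flip j k.rev * R.flip i.rev j.rev * bracket S T k =
      T.flip j.rev k * R.flip i.rev j * rowDefect S T i j := by
  have e₁ := h.flip_none i j k.rev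
  have e₂ := h.flip₁₂ i.rev j k.rev
  have e₃ := h.flip₁₂ i.rev j k
  have e₄ := h.flip₁₃ i.rev j k.rev
  have e₅ := h.flip₁₃ i.rev j k
  have e₆ := h.flip₂₃ i j k.rev
  have e₇ := h.flip₂₃ i j k
  simp only [Fin.rev_rev] at e₁ e₂ e₃ e₄ e₅ e₆ e₇
  rw [bracket, rowDefect, S.flipProd_eq i, T.flipProd_eq j, S.rowProd_eq i k, T.rowProd_eq j k,
    S.colProdSum_eq i k, T.colProdSum_eq j k, S.freeFermion_eq i k, T.freeFermion_eq j k]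
  linear_combination
    S.flip i.rev k * (T.diag j k * T.diag j.rev k + T.diag j k.rev * T.diag j.rev k.rev) * e₁ +
    S.diag i k * T.diag j k * T.flip j.rev k * e₂ +
    S.diag i k.rev * T.diag j k.rev * T.flip j.rev k * e₃ -
    S.diag i k * T.flip j k * T.flip j.rev k * e₄ -
    S.diag i k.rev * T.flip j k.rev * T.flip j.rev k * e₅ -
    S.flip i.rev k * T.diag j k * T.flip j.rev k * e₆ -
    S.flip i.rev k.rev * T.diag j k.rev * T.flip j.rev k * e₇

-- Reversing the second spin changes the sign of the left-hand side; the coefficients of the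
-- relations are chosen antisymmetric under this reversal.
lemma flip_mul_flip_mul_freeFermion_mul (h : YangBaxter R S T) :
    R.flip 0 0 * R.flip 0 1 * (S.freeFermion *
      (T.diag 1 0 ^ 2 + T.diag 1 1 ^ 2 - (T.diag 0 0 ^ 2 + T.diag 0 1 ^ 2))) = 0 := by
  obtain ⟨-, h₁₂, h₁₃, h₂₃⟩ := h
  simp only [Fin.forall_fin_two, Fin.reduceRev] at h₁₂ h₁₃ h₂₃
  obtain ⟨⟨⟨a₀₀₀, a₀₀₁⟩, a₀₁₀, a₀₁₁⟩, -⟩ := h₁₂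
  obtain ⟨⟨⟨b₀₀₀, b₀₀₁⟩, b₀₁₀, b₀₁₁⟩, -⟩ := h₁₃
  obtain ⟨⟨⟨c₀₀₀, c₀₀₁⟩, c₀₁₀, c₀₁₁⟩, ⟨c₁₀₀, c₁₀₁⟩, c₁₁₀, c₁₁₁⟩ := h₂₃
  rw [freeFermion]
  linear_combination
    R.flip 0 1 * (S.diag 0 1 * T.diag 1 0 + S.diag 1 1 * T.diag 0 0) * a₀₀₀ +
    S.flip 0 1 * (R.diag 0 1 * T.diag 1 1 - R.diag 1 1 * T.diag 1 0) * b₀₀₀ -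
    R.flip 0 1 * S.flip 0 1 * (T.diag 1 1 * c₀₀₀ + T.diag 0 0 * c₁₀₀) +
    R.flip 0 1 * (S.diag 0 0 * T.diag 1 1 + S.diag 1 0 * T.diag 0 1) * a₀₀₁ +
    S.flip 0 0 * (R.diag 0 1 * T.diag 1 0 - R.diag 1 1 * T.diag 1 1) * b₀₀₁ -
    R.flip 0 1 * S.flip 0 0 * (T.diag 1 0 * c₀₀₁ + T.diag 0 1 * c₁₀₁) -
    R.flip 0 0 * (S.diag 0 1 * T.diag 0 0 + S.diag 1 1 * T.diag 1 0) * a₀₁₀ -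
    S.flip 0 1 * (R.diag 0 0 * T.diag 0 1 - R.diag 1 0 * T.diag 0 0) * b₀₁₀ +
    R.flip 0 0 * S.flip 0 1 * (T.diag 0 1 * c₀₁₀ + T.diag 1 0 * c₁₁₀) -
    R.flip 0 0 * (S.diag 0 0 * T.diag 0 1 + S.diag 1 0 * T.diag 1 1) * a₀₁₁ -
    S.flip 0 0 * (R.diag 0 0 * T.diag 0 0 - R.diag 1 0 * T.diag 0 1) * b₀₁₁ +
    R.flip 0 0 * S.flip 0 0 * (T.diag 0 0 * c₀₁₁ + T.diag 1 1 * c₁₁₁)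

end CommRing

section IsDomain

variable {A : Type*} [CommRing A] [IsDomain A] {R S T : SpinWeights A}

lemma flip_mul_flip_mul_flip_mul_flip (h : YangBaxter R S T) (hS : ∀ i j, S.flip i j ≠ 0)
    (i j k : Fin 2) :
    R.flip i j * R.flip i.rev j * (T.flip j.rev k * T.flip j.rev k.rev) =
      R.flip i j.rev * R.flip i.rev j.rev * (T.flip j k * T.flip j k.rev) := by
  have e := h.flip_none i j k
  have e' := h.flip_none i.rev j k.rev
  simp only [Fin.rev_rev] at e'
  apply mul_left_cancel₀ (mul_ne_zero (hS i.rev k) (hS i k.rev))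
  linear_combination R.flip i.rev j * S.flip i k.rev * T.flip j.rev k * e +
    R.flip i.rev j.rev * S.flip i k.rev * T.flip j k * e'

lemma rowDefect_rev (h : YangBaxter R S T) (hR : ∀ i j, R.flip i j ≠ 0)
    (hS : ∀ i j, S.flip i j ≠ 0) (hT : ∀ i j, T.flip i j ≠ 0) (i j : Fin 2) :
    rowDefect S T i.rev j.rev = rowDefect S T i j := by
  have e := h.flip_mul_bracket i j 0
  have e' := h.flip_mul_bracket i.rev j.rev 0
  have c := h.flip_mul_flip_mul_flip_mul_flip hS i j 0
  simp only [Fin.rev_rev] at e'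
  apply mul_left_cancel₀ (mul_ne_zero (mul_ne_zero (hT j 0) (hR i j.rev))
    (mul_ne_zero (hT j.rev 0) (hR i.rev j)))
  linear_combination T.flip j 0 * R.flip i j.rev * e - T.flip j.rev 0 * R.flip i.rev j * e' +
    bracket S T 0 * c

lemma freeFermion_mul_rowProd_sub_comm (h : YangBaxter R S T) (hR : ∀ i j, R.flip i j ≠ 0)
    (hS : ∀ i j, S.flip i j ≠ 0) (hT : ∀ i j, T.flip i j ≠ 0) :
    S.freeFermion * (T.rowProd 0 - T.rowProd 1) =
      T.freeFermion * (S.rowProd 0 - S.rowProd 1) := by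
  have e : rowDefect S T 1 1 = rowDefect S T 0 0 := h.rowDefect_rev hR hS hT 0 0
  simp only [rowDefect] at e
  linear_combination -e

lemma two_mul_freeFermion_mul_rowProd_sub (h : YangBaxter R S T)
    (hR : ∀ i j, R.flip i j ≠ 0) (hS : ∀ i j, S.flip i j ≠ 0) (hT : ∀ i j, T.flip i j ≠ 0) :
    2 * (S.freeFermion * (T.rowProd 0 - T.rowProd 1)) = 0 := by
  have e : rowDefect S T 1 1 = rowDefect S T 0 0 := h.rowDefect_rev hR hS hT 0 0
  have e' : rowDefect S T 1 0 = rowDefect S T 0 1 := h.rowDefect_rev hR hS hT 0 1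
  simp only [rowDefect] at e e'
  linear_combination e' - e

lemma flipProd_mul_bracket_sq (h : YangBaxter R S T) (hR : ∀ j, R.flip 1 j ≠ 0)
    (hX : S.freeFermion * (T.rowProd 0 - T.rowProd 1) = 0) (k : Fin 2) :
    T.flipProd k.rev * bracket S T k ^ 2 = T.flipProd k * rowDefect S T 0 0 ^ 2 := by
  have e : T.flip 0 k.rev * R.flip 1 1 * bracket S T k =
    T.flip 1 k * R.flip 1 0 * rowDefect S T 0 0 := h.flip_mul_bracket 0 0 k
  have e' : T.flip 1 k.rev * R.flip 1 0 * bracket S T k =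
    T.flip 0 k * R.flip 1 1 * rowDefect S T 0 1 := h.flip_mul_bracket 0 1 k
  have defect_eq : rowDefect S T 0 1 = rowDefect S T 0 0 := by
    simp only [rowDefect]
    linear_combination -hX
  rw [defect_eq] at e'
  apply mul_left_cancel₀ (mul_ne_zero (hR 0) (hR 1))
  simp only [flipProd]
  linear_combination T.flip 1 k.rev * R.flip 1 0 * bracket S T k * e +
    T.flip 1 k * R.flip 1 0 * rowDefect S T 0 0 * e'

lemma flip_cross_ratio (h : YangBaxter R S T) (h₀ : R.flip 0 0 ≠ 0) (h₁ : R.flip 1 1 ≠ 0) :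
    T.flip 0 1 * S.flip 1 0 * (T.flip 1 1 * S.flip 0 0) =
      T.flip 0 0 * S.flip 1 1 * (T.flip 1 0 * S.flip 0 1) := by
  have e : R.flip 0 0 * S.flip 1 0 * T.flip 1 1 = R.flip 1 1 * S.flip 0 1 * T.flip 0 0 :=
    h.flip_none 0 0 0
  have e' : R.flip 0 0 * S.flip 1 1 * T.flip 1 0 = R.flip 1 1 * S.flip 0 0 * T.flip 0 1 :=
    h.flip_none 0 0 1
  apply mul_left_cancel₀ (mul_ne_zero h₀ h₁)
  linear_combination R.flip 1 1 * S.flip 0 0 * T.flip 0 1 * e -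
    R.flip 1 1 * S.flip 0 1 * T.flip 0 0 * e'

end IsDomain

section CharTwo

variable {A : Type*} [CommRing A] [CharP A 2] {R S T : SpinWeights A}

lemma flip_mul_mixedSum (h : YangBaxter R S T) (hR : R.total = 0) (hS : S.total = 0)
    (hT : T.total = 0) (i j : Fin 2) :
    R.flip i j * mixedSum S T =
      R.diagSum * (S.flip i 0 * T.flip j 1 + S.flip i 1 * T.flip j 0) := by
  have e := h.flip₁₂ i j 0
  have e' := h.flip₁₂ i j 1
  simp only [mixedSum, diagSum, colSum, diag_one_one_of_total_eq_zero, hR, hS, hT]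
  fin_cases i <;> fin_cases j <;>
    simp only [Fin.zero_eta, Fin.mk_one, Fin.reduceRev, diag_one_one_of_total_eq_zero, hR, hS, hT]
      at e e' ⊢ <;>
    linear_combination (norm := (ring_nf; reduce_mod_char!)) e + e'

lemma flip_mul_mixedSum' (h : YangBaxter R S T) (hR : R.total = 0) (hS : S.total = 0)
    (hT : T.total = 0) (j k : Fin 2) :
    T.flip j k * mixedSum R S =
      T.diagSum * (R.flip 0 j * S.flip 1 k + R.flip 1 j * S.flip 0 k) := by
  have e := h.reverse.flip_mul_mixedSum (T.total_swap.trans hT) (S.total_swap.trans hS)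
    (R.total_swap.trans hR) k j
  rw [mixedSum_swap_swap hS hR] at e
  simp only [swap, diagSum] at e ⊢
  linear_combination e

lemma flip_mul_freeFermion_mul_of_diagSum_eq_zero (h : YangBaxter R S T) (hR : R.total = 0)
    (hα : R.diagSum = 0) (hS : S.total = 0) (hT : T.total = 0) (j : Fin 2) :
    R.flip 0 j * (S.freeFermion * (S.diag 0 0 * T.diag j 1 + S.diag 1 1 * T.diag j.rev 0)) = 0 := by
  have hR₁₁ : R.diag 1 1 = R.diag 0 0 := (CharTwo.add_eq_zero.1 hα).symm
  have hR₁₀ : R.diag 1 0 = R.diag 0 1 := by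
    have := diag_one_one_of_total_eq_zero hR
    grind
  have hS₁₁ := diag_one_one_of_total_eq_zero hS
  have hT₁₁ := diag_one_one_of_total_eq_zero hT
  have e₁ := h.flip₁₂ 0 j 0
  have e₂ := h.flip₁₂ 0 j 1
  have e₃ := h.flip₁₂ 1 j 0
  have e₄ := h.flip₁₂ 1 j 1
  have e₅ := h.flip₂₃ 0 j 0
  have e₆ := h.flip₂₃ 0 j 1
  have e₇ := h.flip₂₃ 1 j 0
  have e₈ := h.flip₂₃ 1 j 1
  rw [freeFermion]
  fin_cases j <;>
    simp only [Fin.zero_eta, Fin.mk_one, Fin.reduceRev, hR₁₁, hR₁₀, hS₁₁, hT₁₁]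
      at e₁ e₂ e₃ e₄ e₅ e₆ e₇ e₈ ⊢ <;>
    linear_combination (norm := (ring_nf; reduce_mod_char!))
      (S.flip 0 1 * S.flip 1 0 +
        (S.diag 0 0 + S.diag 0 1 + S.diag 1 0) * (S.diag 0 0 + S.diag 0 1)) * e₁ +
      (S.flip 0 1 * S.flip 1 0 + S.diag 0 0 * (S.diag 0 0 + S.diag 0 1)) * e₂ +
      S.flip 0 0 * S.flip 0 1 * (e₃ + e₄) + S.flip 0 1 * S.diag 1 0 * e₅ +
      S.flip 0 0 * (S.diag 0 0 + S.diag 0 1 + S.diag 1 0) * e₆ +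
      S.flip 0 1 * S.diag 0 1 * e₇ + S.diag 0 0 * S.flip 0 0 * e₈

variable [IsDomain A]

lemma total_eq_zero (h : YangBaxter R S T) (hR : ∀ j, R.flip 0 j ≠ 0) (hF : S.freeFermion ≠ 0) :
    T.total = 0 := by
  have e := (mul_eq_zero_iff_left (mul_ne_zero (hR 0) (hR 1))).1
    h.flip_mul_flip_mul_freeFermion_mul
  rw [mul_eq_zero_iff_left hF] at e
  rw [← pow_eq_zero_iff two_ne_zero]
  simp only [total, CharTwo.add_sq]
  linear_combination (norm := (ring_nf; reduce_mod_char!)) e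

lemma diagSum_mul_flip_mul_flip_add (h : YangBaxter R S T) (hT₀ : T.flip 0 0 ≠ 0)
    (hR : R.total = 0) (hS : S.total = 0) (hT : T.total = 0) :
    R.diagSum * T.diagSum * (S.flip 0 0 * S.flip 1 1 + S.flip 0 1 * S.flip 1 0) =
      mixedSum R S * mixedSum S T := by
  have e := h.flip_mul_mixedSum' hR hS hT 0 0
  have e₀ := h.flip_mul_mixedSum hR hS hT 0 0
  have e₁ := h.flip_mul_mixedSum hR hS hT 1 0
  apply mul_left_cancel₀ hT₀
  linear_combination (norm := (ring_nf; reduce_mod_char!)) mixedSum S T * e +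
    T.diagSum * S.flip 1 0 * e₀ + T.diagSum * S.flip 0 0 * e₁

lemma diagSum_mul_diagSum_mul_freeFermion (h : YangBaxter R S T) (hT₀ : T.flip 0 0 ≠ 0)
    (hR : R.total = 0) (hS : S.total = 0) (hT : T.total = 0) :
    R.diagSum * T.diagSum * S.freeFermion = S.diagSum * invariantSum R S T := by
  have e := h.diagSum_mul_flip_mul_flip_add hT₀ hR hS hT
  rw [freeFermion_of_total_eq_zero hS, mul_add, e]
  simp only [mixedSum, invariantSum]
  grind

lemma diagSum_mul_diagSum_mul_freeFermion' (h : YangBaxter R S T) (hR₀ : R.flip 0 0 ≠ 0)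
    (hR : R.total = 0) (hS : S.total = 0) (hT : T.total = 0) :
    R.diagSum * S.diagSum * T.freeFermion = T.diagSum * invariantSum R S T := by
  have e := h.reverse.cross.diagSum_mul_diagSum_mul_freeFermion
    hR₀ (S.total_swap.trans hS) (T.total_swap.trans hT) hR
  rw [invariantSum_cross (R.total_swap.trans hR), invariantSum_reverse hR hS hT,
    freeFermion_partialTranspose, freeFermion_swap] at e
  simp only [diagSum, swap, partialTranspose] at e ⊢
  linear_combination e

lemma invariantSum_mul_mixedSum (h : YangBaxter R S T) (hR : ∀ i j, R.flip i j ≠ 0)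
    (hS : ∀ i j, S.flip i j ≠ 0) (hT : ∀ i j, T.flip i j ≠ 0) (hR₀ : R.total = 0)
    (hS₀ : S.total = 0) (hT₀ : T.total = 0) : invariantSum R S T * mixedSum S T = 0 := by
  have e := h.freeFermion_mul_rowProd_sub_comm hR hS hT
  have eS := h.diagSum_mul_diagSum_mul_freeFermion (hT 0 0) hR₀ hS₀ hT₀
  have eT := h.diagSum_mul_diagSum_mul_freeFermion' (hR 0 0) hR₀ hS₀ hT₀
  rw [rowProd_zero_sub_rowProd_one_of_total_eq_zero hS₀,
    rowProd_zero_sub_rowProd_one_of_total_eq_zero hT₀] at e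
  rw [mixedSum]
  linear_combination (norm := (ring_nf; reduce_mod_char!)) R.diagSum * e + T.colSum * eS +
    S.colSum * eT

-- The symmetric images of the previous lemma add up to twice everything except this monomial.
lemma invariantSum_mul_diagSum (h : YangBaxter R S T) (hR : ∀ i j, R.flip i j ≠ 0)
    (hS : ∀ i j, S.flip i j ≠ 0) (hT : ∀ i j, T.flip i j ≠ 0) (hR₀ : R.total = 0)
    (hS₀ : S.total = 0) (hT₀ : T.total = 0) :
    invariantSum R S T * (R.diagSum * S.diagSum * T.diagSum) = 0 := by
  have hST := h.invariantSum_mul_mixedSum hR hS hT hR₀ hS₀ hT₀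
  have hRS : invariantSum R S T * mixedSum R S = 0 := by
    have e := h.reverse.invariantSum_mul_mixedSum (fun i j => hT j i) (fun i j => hS j i)
      (fun i j => hR j i) (T.total_swap.trans hT₀) (S.total_swap.trans hS₀)
      (R.total_swap.trans hR₀)
    rwa [invariantSum_reverse hR₀ hS₀ hT₀, mixedSum_swap_swap hS₀ hR₀] at e
  have hRT : invariantSum R S T *
      (R.diagSum * (T.diagSum + T.colSum) + R.colSum * T.diagSum) = 0 := by
    have e := h.cross.invariantSum_mul_mixedSum (fun i j => hS i.rev j) (fun i j => hR i.rev j)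
      (fun i j => hT j i) hS₀ hR₀ (T.total_swap.trans hT₀)
    rw [invariantSum_cross hT₀, mixedSum, colSum_swap_of_total_eq_zero hT₀] at e
    exact e
  rw [mixedSum] at hST hRS
  linear_combination (norm := (ring_nf; reduce_mod_char!)) R.diagSum * hST + T.diagSum * hRS +
    S.diagSum * hRT

lemma diagSum_mul_diagSum_mul_freeFermion_eq_zero (h : YangBaxter R S T)
    (hR : ∀ i j, R.flip i j ≠ 0) (hS : ∀ i j, S.flip i j ≠ 0) (hT : ∀ i j, T.flip i j ≠ 0)
    (hR₀ : R.total = 0) (hS₀ : S.total = 0) (hT₀ : T.total = 0) :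
    R.diagSum * T.diagSum * S.freeFermion = 0 := by
  have e := h.diagSum_mul_diagSum_mul_freeFermion (hT 0 0) hR₀ hS₀ hT₀
  have e' := h.invariantSum_mul_diagSum hR hS hT hR₀ hS₀ hT₀
  rw [← pow_eq_zero_iff two_ne_zero]
  linear_combination R.diagSum * T.diagSum * S.freeFermion * e + S.freeFermion * e'

lemma freeFermion_mul_diagSum_mul_colSum (h : YangBaxter R S T) (hR : ∀ j, R.flip 0 j ≠ 0)
    (hR₀ : R.total = 0) (hα : R.diagSum = 0) (hS₀ : S.total = 0) (hT₀ : T.total = 0) :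
    S.freeFermion * (S.diagSum * T.colSum) = 0 := by
  have e (j) := (mul_eq_zero_iff_left (hR j)).1
    (h.flip_mul_freeFermion_mul_of_diagSum_eq_zero hR₀ hα hS₀ hT₀ j)
  have e₀ := e 0
  have e₁ := e 1
  simp only [Fin.reduceRev, diagSum, colSum, diag_one_one_of_total_eq_zero hS₀,
    diag_one_one_of_total_eq_zero hT₀] at e₀ e₁ ⊢
  linear_combination (norm := (ring_nf; reduce_mod_char!)) e₀ + e₁

lemma freeFermion_mul_rowProd_sub_of_charTwo (h : YangBaxter R S T)
    (hR : ∀ i j, R.flip i j ≠ 0) (hS : ∀ i j, S.flip i j ≠ 0) (hT : ∀ i j, T.flip i j ≠ 0) :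
    S.freeFermion * (T.rowProd 0 - T.rowProd 1) = 0 := by
  by_contra hX
  have hXY := h.freeFermion_mul_rowProd_sub_comm hR hS hT
  have hY : T.freeFermion * (S.rowProd 0 - S.rowProd 1) ≠ 0 := hXY ▸ hX
  have hFS := left_ne_zero_of_mul hX
  have hFT := left_ne_zero_of_mul hY
  have hT₀ : T.total = 0 := h.total_eq_zero (hR 0) hFS
  have hR₀ : R.total = 0 := R.total_swap.symm.trans <|
    h.reverse.total_eq_zero (fun j => hT j 0) (by rwa [freeFermion_swap])
  have hS₀ : S.total = 0 := by
    have e := h.reverse.cross.reverse.total_eq_zero (fun j => hR j 0)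
      (by rwa [freeFermion_swap, freeFermion_partialTranspose, freeFermion_swap])
    rw [total_swap] at e
    exact S.total_swap.symm.trans e
  rw [rowProd_zero_sub_rowProd_one_of_total_eq_zero hT₀] at hX
  rw [rowProd_zero_sub_rowProd_one_of_total_eq_zero hS₀] at hY
  obtain ⟨hαT, hβT⟩ := mul_ne_zero_iff.1 (right_ne_zero_of_mul hX)
  have hαS := left_ne_zero_of_mul (right_ne_zero_of_mul hY)
  have hαR : R.diagSum = 0 := by
    have e := h.diagSum_mul_diagSum_mul_freeFermion_eq_zero hR hS hT hR₀ hS₀ hT₀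
    rwa [mul_assoc, mul_eq_zero_iff_right (mul_ne_zero hαT hFS)] at e
  exact mul_ne_zero hFS (mul_ne_zero hαS hβT)
    (h.freeFermion_mul_diagSum_mul_colSum (hR 0) hR₀ hαR hS₀ hT₀)

end CharTwo

lemma freeFermion_mul_rowProd_sub {A : Type*} [CommRing A] [IsDomain A] {R S T : SpinWeights A}
    (h : YangBaxter R S T) (hR : ∀ i j, R.flip i j ≠ 0) (hS : ∀ i j, S.flip i j ≠ 0)
    (hT : ∀ i j, T.flip i j ≠ 0) : S.freeFermion * (T.rowProd 0 - T.rowProd 1) = 0 := by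
  by_cases two_eq_zero : (2 : A) = 0
  · have := CharTwo.of_one_ne_zero_of_two_eq_zero one_ne_zero two_eq_zero
    exact h.freeFermion_mul_rowProd_sub_of_charTwo hR hS hT
  · exact (mul_eq_zero_iff_left two_eq_zero).1 (h.two_mul_freeFermion_mul_rowProd_sub hR hS hT)

end YangBaxter

section Matrix

lemma sum_spins {M : Type*} [AddCommMonoid M] (i j k : Fin 2) (f : Fin 2 → Fin 2 → Fin 2 → M) :
    ∑ a, ∑ b, ∑ c, f a b c =
      f i j k + f i j k.rev + f i j.rev k + f i j.rev k.rev +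
        f i.rev j k + f i.rev j k.rev + f i.rev j.rev k + f i.rev j.rev k.rev := by
  have sum_eq_add_rev (i : Fin 2) (g : Fin 2 → M) : ∑ a, g a = g i + g i.rev := by
    fin_cases i <;>
      simp only [Fin.sum_univ_two, Fin.zero_eta, Fin.mk_one, Fin.reduceRev, add_comm]
  rw [sum_eq_add_rev i, sum_eq_add_rev j (fun b => ∑ c, f i b c),
    sum_eq_add_rev j (fun b => ∑ c, f i.rev b c)]
  simp only [sum_eq_add_rev k, add_assoc]

variable {F : Type*} [Field F]

lemma op12_mul_op13_mul_op23_apply_s19 (R S T : Matrix (Fin 2 × Fin 2) (Fin 2 × Fin 2) F)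
    (i j k i' j' k' : Fin 2) :
    (op12 R * op13 S * op23 T) (i, j, k) (i', j', k') =
      ∑ a, ∑ b, ∑ c, R (i, j) (a, b) * S (a, k) (i', c) * T (b, c) (j', k') := by
  simp only [Matrix.mul_apply, op12, op13, op23, Fintype.sum_prod_type, Matrix.of_apply, mul_ite,
    ite_mul, mul_zero, zero_mul, Finset.sum_ite_eq, Finset.sum_ite_eq', Finset.mem_univ, if_true,
    Finset.sum_ite_irrel, Finset.sum_const_zero, Fin.sum_univ_two]
  ring

lemma op23_mul_op13_mul_op12_apply (R S T : Matrix (Fin 2 × Fin 2) (Fin 2 × Fin 2) F)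
    (i j k i' j' k' : Fin 2) :
    (op23 T * op13 S * op12 R) (i, j, k) (i', j', k') =
      ∑ a, ∑ b, ∑ c, T (j, k) (b, c) * S (i, c) (a, k') * R (a, b) (i', j') := by
  simp only [Matrix.mul_apply, op12, op13, op23, Fintype.sum_prod_type, Matrix.of_apply, mul_ite,
    ite_mul, mul_zero, zero_mul, Finset.sum_ite_eq, Finset.sum_ite_eq', Finset.mem_univ, if_true,
    Finset.sum_ite_irrel, Finset.sum_const_zero, Fin.sum_univ_two]
  ring

variable {R S T : Matrix (Fin 2 × Fin 2) (Fin 2 × Fin 2) F}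

lemma EightVertex.apply_eq_zero_s19 (hR : EightVertex R) (i j : Fin 2) :
    R (i, j) (i.rev, j) = 0 ∧ R (i.rev, j) (i, j) = 0 ∧
      R (i, j) (i, j.rev) = 0 ∧ R (i, j.rev) (i, j) = 0 := by
  refine ⟨?_, ?_, ?_, ?_⟩ <;> apply hR <;> rw [Fin.val_rev] <;> omega

lemma YangBaxter.of_eightVertex (hR : EightVertex R) (hS : EightVertex S) (hT : EightVertex T)
    (h : op12 R * op13 S * op23 T = op23 T * op13 S * op12 R) :
    YangBaxter (ofMatrix R) (ofMatrix S) (ofMatrix T) := by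
  have entry (i j k i' j' k' : Fin 2) := congr_fun₂ h (i, j, k) (i', j', k')
  simp only [op12_mul_op13_mul_op23_apply_s19, op23_mul_op13_mul_op12_apply] at entry
  have zR := hR.apply_eq_zero_s19
  have zS := hS.apply_eq_zero_s19
  have zT := hT.apply_eq_zero_s19
  constructor <;> intro i j k <;> simp only [ofMatrix, Fin.rev_rev]
  · have e := entry i j k i j k
    simp only [sum_spins i j k, zR, zS, zT, mul_zero, zero_mul, add_zero] at e
    linear_combination e
  · have e := entry i j k i.rev j.rev k
    simp only [sum_spins i j k, zR, zS, zT, mul_zero, zero_mul, add_zero, zero_add] at e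
    linear_combination e
  · have e := entry i j k i.rev j k.rev
    simp only [sum_spins i j k, zR, zS, zT, mul_zero, zero_mul, add_zero, zero_add] at e
    linear_combination e
  · have e := entry i j k i j.rev k.rev
    simp only [sum_spins i j k, zR, zS, zT, mul_zero, zero_mul, add_zero, zero_add] at e
    linear_combination e

end Matrix

namespace SpinWeights

variable {F : Type*} [Field F]

lemma flip_ofMatrix_ne_zero {R : Matrix (Fin 2 × Fin 2) (Fin 2 × Fin 2) F} (hc : wc R 1 ≠ 0)
    (hc' : wc R (-1) ≠ 0) (hd : wd R 1 ≠ 0) (hd' : wd R (-1) ≠ 0) (i j : Fin 2) :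
    (ofMatrix R).flip i j ≠ 0 := by
  fin_cases i <;> fin_cases j
  exacts [hd, hc, hc', hd']

variable (R S T : Matrix (Fin 2 × Fin 2) (Fin 2 × Fin 2) F)

lemma freeFermion_ofMatrix : (ofMatrix R).freeFermion = Fwt R := rfl

lemma rowProd_ofMatrix_zero : (ofMatrix R).rowProd 0 = wa R 1 * wb R 1 := rfl

lemma rowProd_ofMatrix_one : (ofMatrix R).rowProd 1 = wa R (-1) * wb R (-1) := mul_comm ..

lemma flipProd_ofMatrix_zero : (ofMatrix R).flipProd 0 = wc R (-1) * wd R 1 := rfl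

lemma flipProd_ofMatrix_one : (ofMatrix R).flipProd 1 = wc R 1 * wd R (-1) := mul_comm ..

lemma bracket_ofMatrix_zero : bracket (ofMatrix S) (ofMatrix T) 0 = Gwt 1 S T := rfl

lemma bracket_ofMatrix_one : bracket (ofMatrix S) (ofMatrix T) 1 = Gwt (-1) S T := by
  simp only [bracket, flipProd_ofMatrix_one]
  rfl

lemma rowDefect_ofMatrix_zero_zero : rowDefect (ofMatrix S) (ofMatrix T) 0 0 =
    wa T 1 * wb T 1 * Fwt S - wa S 1 * wb S 1 * Fwt T := rfl

end SpinWeights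

/-- Necessary conditions on S and T (with all sixteen weights nonzero) for the existence
of an eight-vertex matrix R with nonzero c- and d-weights satisfying [[R,S,T]] = 0. -/
theorem stmt_19 (F : Type*) [Field F]
    (S T : Matrix (Fin 2 × Fin 2) (Fin 2 × Fin 2) F)
    (hS : EightVertex S) (hT : EightVertex T)
    (hSnz : ∀ i : ℤ, i = 1 ∨ i = -1 →
      wa S i ≠ 0 ∧ wb S i ≠ 0 ∧ wc S i ≠ 0 ∧ wd S i ≠ 0)
    (hTnz : ∀ i : ℤ, i = 1 ∨ i = -1 →
      wa T i ≠ 0 ∧ wb T i ≠ 0 ∧ wc T i ≠ 0 ∧ wd T i ≠ 0)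
    (hex : ∃ R : Matrix (Fin 2 × Fin 2) (Fin 2 × Fin 2) F, EightVertex R ∧
      wc R 1 ≠ 0 ∧ wc R (-1) ≠ 0 ∧ wd R 1 ≠ 0 ∧ wd R (-1) ≠ 0 ∧
      op12 R * op13 S * op23 T = op23 T * op13 S * op12 R) :
    (wa T 1 * wb T 1 * Fwt S = wa T (-1) * wb T (-1) * Fwt S) ∧
    (wa S 1 * wb S 1 * Fwt T = wa S (-1) * wb S (-1) * Fwt T) ∧
    (∀ i : ℤ, i = 1 ∨ i = -1 →
      wc T i * wd T (-i) * (Gwt i S T) ^ 2 =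
        wc T (-i) * wd T i *
          (wa T 1 * wb T 1 * Fwt S - wa S 1 * wb S 1 * Fwt T) ^ 2) ∧
    (wc T 1 * wc S (-1) * (wd T (-1) * wd S 1) =
      wd T 1 * wd S (-1) * (wc T (-1) * wc S 1)) := by
  obtain ⟨R, hR, hc, hc', hd, hd', hYB⟩ := hex
  have h := YangBaxter.of_eightVertex hR hS hT hYB
  have hRf := flip_ofMatrix_ne_zero hc hc' hd hd'
  obtain ⟨⟨-, -, hSc, hSd⟩, -, -, hSc', hSd'⟩ :=
    And.intro (hSnz 1 (.inl rfl)) (hSnz (-1) (.inr rfl))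
  obtain ⟨⟨-, -, hTc, hTd⟩, -, -, hTc', hTd'⟩ :=
    And.intro (hTnz 1 (.inl rfl)) (hTnz (-1) (.inr rfl))
  have hSf := flip_ofMatrix_ne_zero hSc hSc' hSd hSd'
  have hTf := flip_ofMatrix_ne_zero hTc hTc' hTd hTd'
  have hX := h.freeFermion_mul_rowProd_sub hRf hSf hTf
  have hY := (h.freeFermion_mul_rowProd_sub_comm hRf hSf hTf).symm.trans hX
  have hsq := h.flipProd_mul_bracket_sq (hRf 1) hX
  simp only [freeFermion_ofMatrix, rowProd_ofMatrix_zero, rowProd_ofMatrix_one] at hX hY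
  refine ⟨by linear_combination hX, by linear_combination hY, ?_,
    h.flip_cross_ratio (hRf 0 0) (hRf 1 1)⟩
  rintro i (rfl | rfl)
  · simpa only [Fin.reduceRev, flipProd_ofMatrix_zero, flipProd_ofMatrix_one,
      bracket_ofMatrix_zero, rowDefect_ofMatrix_zero_zero] using hsq 0
  · simpa only [Fin.reduceRev, flipProd_ofMatrix_zero, flipProd_ofMatrix_one, neg_neg,
      bracket_ofMatrix_one, rowDefect_ofMatrix_zero_zero] using hsq 1
end
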